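/- Let n ≥ 1 and n/(n+1) < p ≤ 1, and fix ψ as in the context. There is a constant C = C(n,p,ψ) ≥ 1 such that for every locally integrable f : ℝⁿ → ℝ the following are equivalent: (i) there exists a Hajlasz gradient g of f on ℝⁿ with g ∈ L^p(ℝⁿ); (ii) for every j ∈ {1,…,n} the maximal function M_ψ(D_j f)(x) = sup_{t>0} t^{−n−1} |∫_{ℝⁿ} f(y) (∂_j ψ)((x−y)/t) dy| belongs to L^p(ℝⁿ). Moreover C^{−1} · Σ_{j=1}^n ‖M_ψ(D_j f)‖_{L^p(ℝⁿ)} ≤ inf{‖g‖_{L^p(ℝⁿ)} : g a Hajlasz gradient of f on ℝⁿ} ≤ C · Σ_{j=1}^n ‖M_ψ(D_j f)‖_{L^p(ℝⁿ)}. -/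

import Mathlib

open MeasureTheory Metric Set ENNReal NNReal

noncomputable section

/-- `g` is a Hajlasz gradient of `u` on `U ⊆ ℝⁿ`: `g` is measurable, nonnegative, and
off a set of measure zero `|u x - u y| ≤ ‖x - y‖ (g x + g y)` for `x, y ∈ U`. -/
def IsHajlaszGradientOn (n : ℕ) (u g : EuclideanSpace ℝ (Fin n) → ℝ)
    (U : Set (EuclideanSpace ℝ (Fin n))) : Prop :=
  Measurable g ∧ (∀ x, 0 ≤ g x) ∧
    ∃ E : Set (EuclideanSpace ℝ (Fin n)), MeasureTheory.volume E = 0 ∧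
      ∀ x ∈ U \ E, ∀ y ∈ U \ E, |u x - u y| ≤ ‖x - y‖ * (g x + g y)

/-- The `L^p` quasinorm (for a positive real exponent `p`) of a real function
with respect to the measure `μ`. -/
def lpNorm (n : ℕ) (p : ℝ) (g : EuclideanSpace ℝ (Fin n) → ℝ)
    (μ : Measure (EuclideanSpace ℝ (Fin n))) : ℝ≥0∞ :=
  (∫⁻ x, ENNReal.ofReal |g x| ^ p ∂μ) ^ (1 / p)

/-- The smooth maximal function of the distributional derivative `D_j f`:
`M_ψ(D_j f)(x) = sup_{t>0} t^{-n-1} |∫ f(y) (∂_j ψ)((x-y)/t) dy|`. -/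
def smoothMax (n : ℕ) (ψ f : EuclideanSpace ℝ (Fin n) → ℝ) (j : Fin n)
    (x : EuclideanSpace ℝ (Fin n)) : ℝ≥0∞ :=
  ⨆ (t : {s : ℝ // 0 < s}),
    ENNReal.ofReal ((t.1⁻¹) ^ (n + 1) *
      |∫ y, f y * fderiv ℝ ψ (t.1⁻¹ • (x - y)) (EuclideanSpace.single j 1)|)

/-!
Given a Hajłasz gradient `g ∈ L^p`, a Poincaré inequality with an exponent `d / (d + 1) < r < p` on
the right-hand side bounds the mean oscillation of `f` on a ball of radius `t` by `t` times the
`L^r` mean of `g` on the ball of radius `2t`, where `d` is the dimension. Since `∂ᵥψ` has integral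
zero, the maximal functions of the derivatives of `f` are dominated by
`M_r g = (M (g ^ r)) ^ (1 / r)`, and the Hardy–Littlewood maximal theorem applies.

Conversely, write `δ = ψₐ + (δ - ψₐ)` twice: the error `(δ - ψₐ) ⋆ (δ - ψₐ)` is of second order, so
iterating over dyadic `a` bounds `∂ᵥ(f ⋆ ψₛ)(x)` by averages of `∂ᵥ(f ⋆ ψₐ)` at the smaller scales
`a = 2⁻ᵏ s`, with a gain of `2⁻ᵏ`. Raising the averages to the power `r` costs a factor
`2 ^ (k d (1 / r - 1))`, which this gain absorbs exactly when `r > d / (d + 1)`. Hence `f ⋆ ψₛ` is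
Lipschitz on a ball of radius comparable to `s` around `x`, with constant controlled by
`M_r (M_ψ (Df)) x`. Summing over dyadic scales at Lebesgue points of `f` gives the Hajłasz
inequality.
-/

open Filter Topology Module

theorem sum_rpow_le_card_rpow_mul_sum_rpow {ι : Type*} (s : Finset ι) (w : ι → ℝ≥0∞) {p : ℝ}
    (hp : 0 < p) : (∑ i ∈ s, w i) ^ p ≤ (s.card : ℝ≥0∞) ^ p * ∑ i ∈ s, w i ^ p := by
  rcases s.eq_empty_or_nonempty with rfl | hs
  · simp [hp]
  obtain ⟨j, hj, hmax⟩ := s.exists_max_image w hs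
  calc (∑ i ∈ s, w i) ^ p
      ≤ (s.card * w j) ^ p := by
        gcongr
        simpa using Finset.sum_le_card_nsmul s w (w j) hmax
    _ = (s.card : ℝ≥0∞) ^ p * w j ^ p := ENNReal.mul_rpow_of_nonneg _ _ hp.le
    _ ≤ (s.card : ℝ≥0∞) ^ p * ∑ i ∈ s, w i ^ p := by
        gcongr
        exact Finset.single_le_sum (f := fun i => w i ^ p) (fun _ _ => zero_le) hj

theorem rpow_le_of_le_mul_rpow_one_sub {A B : ℝ≥0∞} {r : ℝ} (hr : 0 < r) (hA : A ≠ ⊤)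
    (h : A ≤ B * A ^ (1 - r)) : A ^ r ≤ B := by
  rcases eq_or_ne A 0 with rfl | hA0
  · simp [hr]
  have hpos : A ^ (1 - r) ≠ 0 := (ENNReal.rpow_pos hA0.bot_lt hA).ne'
  have hfin : A ^ (1 - r) ≠ ⊤ := ENNReal.rpow_ne_top_of_ne_zero hA0 hA
  rw [← ENNReal.mul_le_mul_iff_left hpos hfin, ← ENNReal.rpow_add _ _ hA0 hA]
  simpa using h

theorem ofReal_mul_lintegral_rpow_sub_one_eq_rpow (c : ℝ≥0∞) {a : ℝ} (ha : 0 < a) :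
    ENNReal.ofReal a * ∫⁻ t in Ioi (0 : ℝ), {t : ℝ | ENNReal.ofReal t < c}.indicator
      (fun t => ENNReal.ofReal (t ^ (a - 1))) t = c ^ a := by
  have finite_case (b : ℝ≥0) : ENNReal.ofReal a * ∫⁻ t in Ioi (0 : ℝ),
      {t : ℝ | ENNReal.ofReal t < b}.indicator (fun t => ENNReal.ofReal (t ^ (a - 1))) t
        = (b : ℝ≥0∞) ^ a := by
    have layer := lintegral_rpow_eq_lintegral_meas_lt_mul (Measure.dirac ())
      (f := fun _ : Unit => (b : ℝ)) (.of_forall fun _ => b.2) aemeasurable_const ha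
    rw [lintegral_dirac, ← ENNReal.ofReal_rpow_of_nonneg (by positivity) ha.le,
      ENNReal.ofReal_coe_nnreal] at layer
    rw [layer]
    congr 1
    refine setLIntegral_congr_fun measurableSet_Ioi fun t ht => ?_
    have hiff : ENNReal.ofReal t < b ↔ t < b := by
      rw [← ENNReal.ofReal_coe_nnreal, ENNReal.ofReal_lt_ofReal_iff_of_nonneg (le_of_lt ht)]
    by_cases htb : t < b <;> simp [hiff, htb]
  induction c with
  | coe b => exact finite_case b
  | top =>
    rw [ENNReal.top_rpow_of_pos ha]
    refine ENNReal.eq_top_of_forall_nnreal_le fun b => ?_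
    calc (b : ℝ≥0∞) = ((b ^ (1 / a) : ℝ≥0) : ℝ≥0∞) ^ a := by
          rw [← ENNReal.coe_rpow_of_nonneg _ ha.le, ← NNReal.rpow_mul, one_div_mul_cancel ha.ne',
            NNReal.rpow_one]
      _ ≤ _ := by
          rw [← finite_case]
          gcongr
          exact le_top

theorem lintegral_mul_rpow_eq_lintegral_setLIntegral_lt {α : Type*} [MeasurableSpace α]
    (μ : Measure α) [SFinite μ] {w F : α → ℝ≥0∞} (hw : Measurable w) (hF : Measurable F) {a : ℝ}
    (ha : 0 < a) :
    ∫⁻ x, w x * F x ^ a ∂μ = ENNReal.ofReal a * ∫⁻ t in Ioi (0 : ℝ),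
      ENNReal.ofReal (t ^ (a - 1)) * ∫⁻ x in {x | ENNReal.ofReal t < F x}, w x ∂μ := by
  have hlevel : MeasurableSet {z : α × ℝ | ENNReal.ofReal z.2 < F z.1} :=
    measurableSet_lt (by fun_prop) (by fun_prop)
  have hpow : Measurable fun t : ℝ => ENNReal.ofReal (t ^ (a - 1)) := by fun_prop
  have hjoint : Measurable fun z : α × ℝ => w z.1 * {t : ℝ | ENNReal.ofReal t < F z.1}.indicator
      (fun t => ENNReal.ofReal (t ^ (a - 1))) z.2 :=
    (by fun_prop : Measurable fun z : α × ℝ => w z.1).mul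
      ((hpow.comp measurable_snd).indicator hlevel)
  calc ∫⁻ x, w x * F x ^ a ∂μ
      = ENNReal.ofReal a * ∫⁻ x, (∫⁻ t in Ioi (0 : ℝ), w x *
          {t : ℝ | ENNReal.ofReal t < F x}.indicator
            (fun t => ENNReal.ofReal (t ^ (a - 1))) t) ∂μ := by
        rw [← lintegral_const_mul _ hjoint.lintegral_prod_right']
        refine lintegral_congr fun x => ?_
        simp only
        rw [lintegral_const_mul _ (hpow.indicator (by measurability)), mul_left_comm,
          ofReal_mul_lintegral_rpow_sub_one_eq_rpow _ ha]
    _ = _ := by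
        rw [lintegral_lintegral_swap hjoint.aemeasurable]
        congr 1
        refine lintegral_congr fun t => ?_
        rw [← lintegral_const_mul _ hw, ← lintegral_indicator (measurableSet_lt (by fun_prop) hF)]
        refine lintegral_congr fun x => ?_
        by_cases hx : ENNReal.ofReal t < F x <;> simp [hx, mul_comm]

/-! ### The Hardy–Littlewood maximal theorem -/

section Average

variable {X : Type*} [MeasurableSpace X] {μ : Measure X}

theorem setLAverage_le_of_forall_le {s : Set X} {h : X → ℝ≥0∞} {C : ℝ≥0∞}
    (hC : ∀ y ∈ s, h y ≤ C) : ⨍⁻ y in s, h y ∂μ ≤ C := by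
  rw [setLAverage_eq]
  refine ENNReal.div_le_of_le_mul ?_
  exact (setLIntegral_mono measurable_const hC).trans_eq (setLIntegral_const _ _)

theorem laverage_const_mul {h : X → ℝ≥0∞}
    (c : ℝ≥0∞) (hh : AEMeasurable h μ) : ⨍⁻ y, c * h y ∂μ = c * ⨍⁻ y, h y ∂μ := by
  simp only [laverage_eq, lintegral_const_mul'' c hh, mul_div_assoc]

theorem setLAverage_add_const_le {s : Set X} (h : X → ℝ≥0∞) (c : ℝ≥0∞) :
    ⨍⁻ y in s, (h y + c) ∂μ ≤ ⨍⁻ y in s, h y ∂μ + c := by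
  rw [setLAverage_eq, lintegral_add_right _ measurable_const, ENNReal.add_div, ← setLAverage_eq,
    ← setLAverage_eq]
  exact add_le_add_right (setLAverage_le_of_forall_le fun _ _ => le_rfl) _

theorem laverage_tsum {ι : Type*} [Countable ι] {h : ι → X → ℝ≥0∞}
    (hh : ∀ i, AEMeasurable (h i) μ) : ⨍⁻ y, ∑' i, h i y ∂μ = ∑' i, ⨍⁻ y, h i y ∂μ := by
  simp only [laverage_eq, lintegral_tsum hh, div_eq_mul_inv, ENNReal.tsum_mul_right]

end Average

section MetricMeasureSpace

variable {X : Type*} [PseudoMetricSpace X] [MeasurableSpace X] (μ : Measure X)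

/-- The uncentred Hardy–Littlewood maximal function of `h` with respect to `μ`: the supremum of
the averages of `h` over all balls containing the given point. -/
def maximalFunction (h : X → ℝ≥0∞) (x : X) : ℝ≥0∞ :=
  ⨆ (c : X) (s : ℝ) (_ : x ∈ ball c s), ⨍⁻ y in ball c s, h y ∂μ

theorem laverage_ball_le_maximalFunction (h : X → ℝ≥0∞) {x c : X} {s : ℝ} (hx : x ∈ ball c s) :
    ⨍⁻ y in ball c s, h y ∂μ ≤ maximalFunction μ h x :=
  le_iSup_of_le c <| le_iSup₂_of_le s hx le_rfl

theorem lt_maximalFunction_iff {h : X → ℝ≥0∞} {x : X} {l : ℝ≥0∞} :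
    l < maximalFunction μ h x ↔ ∃ c s, x ∈ ball c s ∧ l < ⨍⁻ y in ball c s, h y ∂μ := by
  simp only [maximalFunction, lt_iSup_iff, exists_prop]

theorem measurable_maximalFunction [OpensMeasurableSpace X] (h : X → ℝ≥0∞) :
    Measurable (maximalFunction μ h) := by
  refine LowerSemicontinuous.measurable fun x l hl => ?_
  obtain ⟨c, s, hx, hlt⟩ := (lt_maximalFunction_iff μ).1 hl
  filter_upwards [isOpen_ball.mem_nhds hx] with z hz
  exact hlt.trans_le (laverage_ball_le_maximalFunction μ h hz)

theorem maximalFunction_le_maximalFunction_indicator_add (h : X → ℝ≥0∞) (l : ℝ≥0∞) (x : X) :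
    maximalFunction μ h x ≤ maximalFunction μ ({y | l < h y}.indicator h) x + l := by
  refine iSup_le fun c => iSup₂_le fun s hx => ?_
  calc ⨍⁻ y in ball c s, h y ∂μ
      ≤ ⨍⁻ y in ball c s, ({y | l < h y}.indicator h y + l) ∂μ := by
        refine laverage_mono_ae (.of_forall fun y => ?_)
        by_cases hy : l < h y
        · simp [hy]
        · simpa [hy] using not_lt.1 hy
    _ ≤ ⨍⁻ y in ball c s, {y | l < h y}.indicator h y ∂μ + l := setLAverage_add_const_le _ _
    _ ≤ _ := by
        gcongr
        exact laverage_ball_le_maximalFunction μ _ hx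

/-- The `L^r` mean of `h` over the ball of radius `s` around `x`. -/
def powerMean (r : ℝ) (h : X → ℝ≥0∞) (x : X) (s : ℝ) : ℝ≥0∞ :=
  (⨍⁻ y in ball x s, h y ^ r ∂μ) ^ (1 / r)

/-- The maximal function `M_r h = (M (h ^ r)) ^ (1 / r)`, obtained by replacing averages with
`L^r` averages; it is bounded on `L^p` for `r < p`. -/
def powerMaximalFunction (r : ℝ) (h : X → ℝ≥0∞) (x : X) : ℝ≥0∞ :=
  maximalFunction μ (fun y => h y ^ r) x ^ (1 / r)

theorem measurable_powerMaximalFunction [OpensMeasurableSpace X] (r : ℝ)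
    (h : X → ℝ≥0∞) : Measurable (powerMaximalFunction μ r h) :=
  (measurable_maximalFunction μ _).pow_const _

theorem powerMean_le_powerMaximalFunction {r : ℝ} (hr : 0 < r) (h : X → ℝ≥0∞) {x c : X} {s : ℝ}
    (hx : x ∈ ball c s) : powerMean μ r h c s ≤ powerMaximalFunction μ r h x :=
  ENNReal.rpow_le_rpow (laverage_ball_le_maximalFunction μ _ hx) (by positivity)

end MetricMeasureSpace

section HaarMeasure

variable {E : Type*} [NormedAddCommGroup E] [NormedSpace ℝ E] [FiniteDimensional ℝ E]
  [MeasurableSpace E] [BorelSpace E] (μ : Measure E) [μ.IsAddHaarMeasure]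

theorem addHaar_ball_eq_ofReal_div_pow_mul (x y : E) {s t : ℝ} (hs : 0 < s) (ht : 0 < t) :
    μ (ball y t) = ENNReal.ofReal (t / s) ^ finrank ℝ E * μ (ball x s) := by
  rw [Measure.addHaar_ball_of_pos μ y ht, Measure.addHaar_ball_of_pos μ x hs, ← mul_assoc,
    ← ENNReal.ofReal_pow (by positivity), ← ENNReal.ofReal_mul (by positivity), ← mul_pow,
    div_mul_cancel₀ _ hs.ne']

theorem laverage_ball_le_of_subset {x y : E} {s t : ℝ} (hs : 0 < s) (hsub : ball x s ⊆ ball y t)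
    (h : E → ℝ≥0∞) :
    ⨍⁻ z in ball x s, h z ∂μ
      ≤ ENNReal.ofReal (t / s) ^ finrank ℝ E * ⨍⁻ z in ball y t, h z ∂μ := by
  have ht : 0 < t := pos_of_mem_ball (hsub (mem_ball_self hs))
  have hvol := addHaar_ball_eq_ofReal_div_pow_mul μ x y hs ht
  have hratio : ENNReal.ofReal (t / s) ^ finrank ℝ E ≠ 0 := by
    have : 0 < t / s := by positivity
    positivity
  calc ⨍⁻ z in ball x s, h z ∂μ
      ≤ (∫⁻ z in ball y t, h z ∂μ) / μ (ball x s) := by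
        rw [setLAverage_eq]
        gcongr
    _ = ENNReal.ofReal (t / s) ^ finrank ℝ E * ((∫⁻ z in ball y t, h z ∂μ)
          / (ENNReal.ofReal (t / s) ^ finrank ℝ E * μ (ball x s))) := by
        rw [← mul_div_assoc, ENNReal.mul_div_mul_left _ _ hratio (by finiteness)]
    _ = _ := by rw [← hvol, ← setLAverage_eq]

theorem exists_mem_ball_notMem_null_le_laverage {h : E → ℝ≥0∞} (hh : Measurable h) {N : Set E}
    (hN : μ N = 0) (x : E) {s : ℝ} (hs : 0 < s) :
    ∃ y ∈ ball x s, y ∉ N ∧ h y ≤ ⨍⁻ z in ball x s, h z ∂μ := by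
  have : IsFiniteMeasure (μ.restrict (ball x s)) := ⟨by simpa using measure_ball_lt_top⟩
  have hnull : μ.restrict (ball x s) (N ∪ (ball x s)ᶜ) = 0 :=
    measure_union_null (Measure.absolutelyContinuous_of_le Measure.restrict_le_self hN)
      (by rw [Measure.restrict_apply measurableSet_ball.compl, compl_inter_self, measure_empty])
  obtain ⟨y, hy, hle⟩ := exists_notMem_null_le_laverage
    (by simpa using (measure_ball_pos μ x hs).ne') hh.aemeasurable.restrict hnull
  simp only [mem_union, mem_compl_iff, not_or, not_not] at hy
  exact ⟨y, hy.2, hy.1, hle⟩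

theorem bddAbove_radii_of_mul_addHaar_ball_le [Nontrivial E] {l T : ℝ≥0∞} (hl : l ≠ 0)
    (hT : T ≠ ⊤) : ∃ R : ℝ, ∀ (c : E) (s : ℝ), l * μ (ball c s) ≤ T → s ≤ R := by
  set m := l * μ (ball (0 : E) 1)
  have hm : m ≠ 0 := mul_ne_zero hl ((measure_ball_pos μ 0 one_pos).ne')
  refine ⟨max 1 (T / m).toReal, fun c s hle => ?_⟩
  rcases le_or_gt s 1 with hs | hs
  · exact le_max_of_le_left hs
  refine le_max_of_le_right ?_
  rw [← ENNReal.ofReal_le_iff_le_toReal (ENNReal.div_ne_top hT hm),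
    ENNReal.le_div_iff_mul_le (.inl hm) (.inr hT)]
  calc ENNReal.ofReal s * m
      ≤ ENNReal.ofReal s ^ finrank ℝ E * m := by
        gcongr
        exact le_self_pow₀ (by simpa using hs.le) finrank_pos.ne'
    _ = l * μ (ball c s) := by
        rw [addHaar_ball_eq_ofReal_div_pow_mul μ 0 c one_pos (by linarith), div_one]
        ring
    _ ≤ T := hle

theorem mul_measure_lt_maximalFunction_le [Nontrivial E] (h : E → ℝ≥0∞) (l : ℝ≥0∞) :
    l * μ {x | l < maximalFunction μ h x} ≤ 4 ^ finrank ℝ E * ∫⁻ y, h y ∂μ := by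
  rcases eq_or_ne l 0 with rfl | hl
  · simp
  rcases eq_or_ne (∫⁻ y, h y ∂μ) ⊤ with hinteg | hinteg
  · simp [hinteg]
  set T : Set (E × ℝ) := {a | 0 < a.2 ∧ l * μ (ball a.1 a.2) ≤ ∫⁻ y in ball a.1 a.2, h y ∂μ}
  obtain ⟨R, hR⟩ := bddAbove_radii_of_mul_addHaar_ball_le μ hl hinteg
  obtain ⟨u, huT, hdisj, hcov⟩ := Vitali.exists_disjoint_subfamily_covering_enlargement_ball T
    Prod.fst Prod.snd R
    (fun a ha => hR a.1 a.2 (ha.2.trans (setLIntegral_le_lintegral _ _))) 4 (by norm_num)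
  have hcount : u.Countable := hdisj.countable_of_isOpen (fun _ _ => isOpen_ball)
    fun a ha => nonempty_ball.2 (huT ha).1
  have hsub : {x | l < maximalFunction μ h x} ⊆ ⋃ b ∈ u, ball b.1 (4 * b.2) := by
    intro x hx
    obtain ⟨c, s, hxs, hlt⟩ := (lt_maximalFunction_iff μ).1 hx
    rw [setLAverage_eq] at hlt
    obtain ⟨b, hb, hcb⟩ := hcov (c, s) ⟨pos_of_mem_ball hxs, ENNReal.mul_le_of_le_div hlt.le⟩
    exact mem_biUnion hb (hcb hxs)
  have := hcount.to_subtype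
  calc l * μ {x | l < maximalFunction μ h x}
      ≤ l * ∑' b : u, μ (ball b.1.1 (4 * b.1.2)) := by
        gcongr
        exact (measure_mono hsub).trans (measure_biUnion_le _ hcount _)
    _ = 4 ^ finrank ℝ E * ∑' b : u, l * μ (ball b.1.1 b.1.2) := by
        simp_rw [← ENNReal.tsum_mul_left]
        refine tsum_congr fun b => ?_
        have hb : 0 < b.1.2 := (huT b.2).1
        rw [addHaar_ball_eq_ofReal_div_pow_mul μ b.1.1 b.1.1 hb (by positivity),
          mul_div_cancel_right₀ _ hb.ne', ENNReal.ofReal_ofNat, mul_left_comm]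
    _ ≤ 4 ^ finrank ℝ E * ∑' b : u, ∫⁻ y in ball b.1.1 b.1.2, h y ∂μ := by
        gcongr with b
        exact (huT b.2).2
    _ = 4 ^ finrank ℝ E * ∫⁻ y in ⋃ b : u, ball b.1.1 b.1.2, h y ∂μ := by
        rw [lintegral_iUnion (fun _ => measurableSet_ball)
          fun (a b : u) hab => hdisj a.2 b.2 (Subtype.coe_ne_coe.2 hab)]
    _ ≤ _ := by
        gcongr
        exact Measure.restrict_le_self

theorem mul_measure_lt_maximalFunction_le_setLIntegral [Nontrivial E] {h : E → ℝ≥0∞}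
    (hh : Measurable h) (l : ℝ≥0∞) :
    l * μ {x | l < maximalFunction μ h x}
      ≤ 2 * 4 ^ finrank ℝ E * ∫⁻ y in {y | l < 2 * h y}, h y ∂μ := by
  have hset : {y | l < 2 * h y} = {y | l / 2 < h y} := by
    ext y
    simp [ENNReal.div_lt_iff, mul_comm]
  have hsub : {x | l < maximalFunction μ h x}
      ⊆ {x | l / 2 < maximalFunction μ ({y | l / 2 < h y}.indicator h) x} := by
    intro x hx
    have hlt := hx.trans_le (maximalFunction_le_maximalFunction_indicator_add μ h (l / 2) x)
    nth_rw 1 [← ENNReal.add_halves l] at hlt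
    exact lt_of_add_lt_add_right hlt
  calc l * μ {x | l < maximalFunction μ h x}
      ≤ l * μ {x | l / 2 < maximalFunction μ ({y | l / 2 < h y}.indicator h) x} := by gcongr
    _ = 2 * (l / 2 * μ {x | l / 2 < maximalFunction μ ({y | l / 2 < h y}.indicator h) x}) := by
        rw [← mul_assoc, ENNReal.mul_div_cancel two_ne_zero ofNat_ne_top]
    _ ≤ 2 * (4 ^ finrank ℝ E * ∫⁻ y, {y | l / 2 < h y}.indicator h y ∂μ) := by
        exact mul_le_mul_right (mul_measure_lt_maximalFunction_le μ _ _) _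
    _ = _ := by rw [hset, lintegral_indicator (measurableSet_lt measurable_const hh), mul_assoc]

theorem ofReal_rpow_mul_measure_lt_maximalFunction_le [Nontrivial E] {h : E → ℝ≥0∞}
    (hh : Measurable h) {t : ℝ} (ht : 0 < t) (b : ℝ) :
    ENNReal.ofReal (t ^ b) * μ {x | ENNReal.ofReal t < maximalFunction μ h x}
      ≤ 2 * 4 ^ finrank ℝ E * (ENNReal.ofReal (t ^ (b - 1))
        * ∫⁻ y in {y | ENNReal.ofReal t < 2 * h y}, h y ∂μ) := by
  calc _ = ENNReal.ofReal (t ^ (b - 1))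
        * (ENNReal.ofReal t * μ {x | ENNReal.ofReal t < maximalFunction μ h x}) := by
        rw [← mul_assoc, ← ENNReal.ofReal_mul (by positivity), Real.rpow_sub_one ht.ne',
          div_mul_cancel₀ _ ht.ne']
    _ ≤ _ := by
        rw [mul_left_comm (2 * 4 ^ finrank ℝ E)]
        exact mul_le_mul_right (mul_measure_lt_maximalFunction_le_setLIntegral μ hh _) _

theorem exists_lintegral_maximalFunction_rpow_le [Nontrivial E] {a : ℝ} (ha : 1 < a) :
    ∃ C : ℝ≥0∞, C ≠ ⊤ ∧ ∀ h : E → ℝ≥0∞, Measurable h →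
      ∫⁻ x, maximalFunction μ h x ^ a ∂μ ≤ C * ∫⁻ x, h x ^ a ∂μ := by
  have ha1 : 0 < a - 1 := sub_pos.2 ha
  have hpos : ENNReal.ofReal (a - 1) ≠ 0 := by simpa using ha1
  set K : ℝ≥0∞ := ENNReal.ofReal a * (2 * 4 ^ finrank ℝ E) * (ENNReal.ofReal (a - 1))⁻¹
  refine ⟨K * 2 ^ (a - 1), by finiteness, fun h hh => ?_⟩
  have hM := lintegral_mul_rpow_eq_lintegral_setLIntegral_lt μ (w := 1) measurable_one
    (measurable_maximalFunction μ h) (by linarith : 0 < a)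
  have hH := lintegral_mul_rpow_eq_lintegral_setLIntegral_lt μ hh (hh.const_mul 2) ha1
  simp only [Pi.one_apply, one_mul, setLIntegral_one] at hM
  calc ∫⁻ x, maximalFunction μ h x ^ a ∂μ
      ≤ ENNReal.ofReal a * (2 * 4 ^ finrank ℝ E * ∫⁻ t in Ioi (0 : ℝ),
          ENNReal.ofReal (t ^ (a - 1 - 1))
            * ∫⁻ y in {y | ENNReal.ofReal t < 2 * h y}, h y ∂μ) := by
        rw [hM, ← lintegral_const_mul' (2 * 4 ^ finrank ℝ E) _ (by finiteness)]
        exact mul_le_mul_right (setLIntegral_mono' measurableSet_Ioi fun t ht =>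
          ofReal_rpow_mul_measure_lt_maximalFunction_le μ hh ht _) _
    _ = K * ∫⁻ x, h x * (2 * h x) ^ (a - 1) ∂μ := by
        rw [hH, mul_assoc (ENNReal.ofReal a * _), ENNReal.inv_mul_cancel_left hpos (by finiteness),
          ← mul_assoc]
    _ = K * 2 ^ (a - 1) * ∫⁻ x, h x ^ a ∂μ := by
        rw [mul_assoc K, ← lintegral_const_mul' (2 ^ (a - 1)) _ (by finiteness)]
        congr 1
        refine lintegral_congr fun x => ?_
        rw [ENNReal.mul_rpow_of_nonneg _ _ ha1.le, mul_left_comm]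
        congr 1
        nth_rw 1 [← ENNReal.rpow_one (h x)]
        rw [← ENNReal.rpow_add_of_nonneg _ _ zero_le_one ha1.le, add_sub_cancel]

theorem exists_lintegral_powerMaximalFunction_rpow_le [Nontrivial E] {r p : ℝ} (hr : 0 < r)
    (hrp : r < p) :
    ∃ C : ℝ≥0∞, C ≠ ⊤ ∧ ∀ h : E → ℝ≥0∞, Measurable h →
      ∫⁻ x, powerMaximalFunction μ r h x ^ p ∂μ ≤ C * ∫⁻ x, h x ^ p ∂μ := by
  obtain ⟨C, hC, hbound⟩ := exists_lintegral_maximalFunction_rpow_le μ ((one_lt_div hr).2 hrp)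
  refine ⟨C, hC, fun h hh => ?_⟩
  simpa only [powerMaximalFunction, ← ENNReal.rpow_mul, one_div_mul_eq_div,
    mul_div_cancel₀ p hr.ne'] using hbound (fun y => h y ^ r) (hh.pow_const r)

/-! ### The Poincaré inequality for Hajłasz gradients -/

/-- The Hajłasz inequality `d (f x) (f y) ≤ d (x, y) (g x + g y)` off a `ν`-null set, for a map `f`
between metric spaces and a gradient with finite values. -/
def HasHajlaszGradient {X Y : Type*} [PseudoEMetricSpace X] [MeasurableSpace X]
    [PseudoEMetricSpace Y] (ν : Measure X) (f : X → Y) (g : X → ℝ≥0) : Prop :=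
  ∃ N : Set X, ν N = 0 ∧ ∀ x ∉ N, ∀ y ∉ N, edist (f x) (f y) ≤ edist x y * (g x + g y)

theorem ofReal_div_two_pow_eq_two_mul (t : ℝ) (k : ℕ) :
    ENNReal.ofReal (t / 2 ^ k) = 2 * ENNReal.ofReal (t / 2 ^ (k + 1)) := by
  rw [← ENNReal.ofReal_ofNat, ← ENNReal.ofReal_mul zero_le_two]
  congr 1
  rw [pow_succ]
  field_simp

theorem tendsto_div_two_pow_nhdsGT_zero {s : ℝ} (hs : 0 < s) :
    Tendsto (fun k : ℕ => s / 2 ^ k) atTop (𝓝[>] 0) := by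
  refine tendsto_nhdsWithin_iff.2 ⟨?_, .of_forall fun k => show 0 < s / 2 ^ k by positivity⟩
  exact tendsto_const_nhds.div_atTop (tendsto_pow_atTop_atTop_of_one_lt one_lt_two)

theorem tendsto_ofReal_div_two_pow (t : ℝ) :
    Tendsto (fun k : ℕ => ENNReal.ofReal (t / 2 ^ k)) atTop (𝓝 0) := by
  simpa only [ENNReal.ofReal_zero] using ENNReal.tendsto_ofReal
    (tendsto_const_nhds.div_atTop (tendsto_pow_atTop_atTop_of_one_lt one_lt_two))

theorem tendsto_of_hajlasz {X Y : Type*} [PseudoMetricSpace X] [PseudoEMetricSpace Y]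
    {f : X → Y} {g : X → ℝ≥0} {N : Set X}
    (hfg : ∀ x ∉ N, ∀ y ∉ N, edist (f x) (f y) ≤ edist x y * (g x + g y)) {x : X} (hx : x ∉ N)
    {t : ℝ} {y : ℕ → X} (hyN : ∀ k, y k ∉ N) (hy : ∀ k, y k ∈ ball x (t / 2 ^ k))
    (hsum : ∑' k, ENNReal.ofReal (t / 2 ^ k) * g (y k) ≠ ⊤) :
    Tendsto (fun k => f (y k)) atTop (𝓝 (f x)) := by
  rw [tendsto_iff_edist_tendsto_0]
  have hbound : Tendsto (fun k => ENNReal.ofReal (t / 2 ^ k) * g (y k)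
      + ENNReal.ofReal (t / 2 ^ k) * g x) atTop (𝓝 0) := by
    simpa using (ENNReal.tendsto_atTop_zero_of_tsum_ne_top hsum).add
      (ENNReal.Tendsto.mul_const (tendsto_ofReal_div_two_pow t)
        (.inr (ENNReal.coe_ne_top (r := g x))))
  refine tendsto_of_tendsto_of_tendsto_of_le_of_le tendsto_const_nhds hbound
    (fun _ => zero_le) fun k => ?_
  refine (hfg _ (hyN k) _ hx).trans ?_
  rw [← mul_add, edist_dist]
  gcongr
  exact (hy k).le

theorem edist_le_tsum_of_hajlasz {X Y : Type*} [PseudoMetricSpace X] [PseudoEMetricSpace Y]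
    {f : X → Y} {g : X → ℝ≥0} {N : Set X}
    (hfg : ∀ x ∉ N, ∀ y ∉ N, edist (f x) (f y) ≤ edist x y * (g x + g y)) {x : X} (hx : x ∉ N)
    {t : ℝ} {y : ℕ → X} (hyN : ∀ k, y k ∉ N) (hy : ∀ k, y k ∈ ball x (t / 2 ^ k)) :
    edist (f (y 0)) (f x) ≤ 6 * ∑' k, ENNReal.ofReal (t / 2 ^ k) * g (y k) := by
  set τ : ℕ → ℝ≥0∞ := fun k => ENNReal.ofReal (t / 2 ^ k)
  set S : ℝ≥0∞ := ∑' k, τ k * g (y k)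
  rcases eq_or_ne S ⊤ with hS | hS
  · simp [hS]
  have hτ (k : ℕ) : τ k = 2 * τ (k + 1) := ofReal_div_two_pow_eq_two_mul t k
  have hdist (k : ℕ) : edist (y k) x ≤ τ k := by
    rw [edist_dist]
    exact ENNReal.ofReal_le_ofReal (hy k).le
  have hstep (k : ℕ) : edist (f (y k)) (f (y (k + 1)))
      ≤ 2 * (τ k * g (y k)) + 4 * (τ (k + 1) * g (y (k + 1))) :=
    calc edist (f (y k)) (f (y (k + 1)))
        ≤ (τ k + τ k) * (g (y k) + g (y (k + 1))) := by
          refine (hfg _ (hyN k) _ (hyN (k + 1))).trans ?_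
          gcongr
          refine (edist_triangle_right _ _ x).trans (add_le_add (hdist k) ((hdist _).trans ?_))
          rw [hτ k, two_mul]
          exact le_self_add
      _ = 2 * (τ k * g (y k)) + 2 * τ k * g (y (k + 1)) := by ring
      _ = _ := by
          rw [hτ k]
          ring
  calc edist (f (y 0)) (f x)
      ≤ ∑' k, (2 * (τ k * g (y k)) + 4 * (τ (k + 1) * g (y (k + 1)))) :=
        edist_le_tsum_of_edist_le_of_tendsto₀ _ hstep (tendsto_of_hajlasz hfg hx hyN hy hS)
    _ ≤ 2 * S + 4 * S := by
        rw [ENNReal.tsum_add, ENNReal.tsum_mul_left, ENNReal.tsum_mul_left]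
        gcongr
        exact ENNReal.tsum_comp_le_tsum_of_injective (add_left_injective 1)
          fun k => τ k * g (y k)
    _ = 6 * S := by ring

theorem exists_mem_ball_notMem_null_le_powerMean {r : ℝ} (hr : 0 < r) {h : E → ℝ≥0∞}
    (hh : Measurable h) {N : Set E} (hN : μ N = 0) (x : E) {s : ℝ} (hs : 0 < s) :
    ∃ y ∈ ball x s, y ∉ N ∧ h y ≤ powerMean μ r h x s := by
  obtain ⟨y, hy, hyN, hle⟩ :=
    exists_mem_ball_notMem_null_le_laverage μ (hh.pow_const r) hN x hs
  exact ⟨y, hy, hyN, by rwa [powerMean, one_div, ENNReal.le_rpow_inv_iff hr]⟩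

theorem exists_edist_le_tsum_powerMean {Y : Type*} [PseudoEMetricSpace Y] {f : E → Y}
    {g : E → ℝ≥0} (hg : Measurable g) {N : Set E} (hN : μ N = 0)
    (hfg : ∀ x ∉ N, ∀ y ∉ N, edist (f x) (f y) ≤ edist x y * (g x + g y)) {r : ℝ} (hr : 0 < r)
    (x₀ : E) {t : ℝ} (ht : 0 < t) :
    ∃ z, ∀ x ∈ ball x₀ t, x ∉ N → edist (f x) (f z) ≤
      9 * ∑' k : ℕ, ENNReal.ofReal (t / 2 ^ k) * powerMean μ r (fun y => g y) x (t / 2 ^ k)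
        + 3 * (ENNReal.ofReal t * powerMean μ r (fun y => g y) x₀ t) := by
  have select := @exists_mem_ball_notMem_null_le_powerMean E _ _ _ _ _ μ _ r hr (fun y => g y)
    (by fun_prop) N hN
  obtain ⟨z, hz, hzN, hgz⟩ := select x₀ ht
  refine ⟨z, fun x hx hxN => ?_⟩
  choose y hy hyN hgy using fun k : ℕ => select x (s := t / 2 ^ k) (by positivity)
  set S := ∑' k : ℕ, ENNReal.ofReal (t / 2 ^ k) * powerMean μ r (fun y => g y) x (t / 2 ^ k)
  have hchain : edist (f (y 0)) (f x) ≤ 6 * S :=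
    (edist_le_tsum_of_hajlasz hfg hxN hyN hy).trans
      (mul_le_mul_right (ENNReal.tsum_le_tsum fun k => mul_le_mul_right (hgy k) _) _)
  have hdist : edist (y 0) z ≤ 3 * ENNReal.ofReal t := by
    rw [edist_dist, ← ENNReal.ofReal_ofNat, ← ENNReal.ofReal_mul zero_le_three]
    refine ENNReal.ofReal_le_ofReal ((dist_triangle4 (y 0) x x₀ z).trans ?_)
    have hy0 : dist (y 0) x < t := by simpa using hy 0
    linarith [mem_ball.1 hx, mem_ball'.1 hz]
  have hgy0 : ENNReal.ofReal t * g (y 0) ≤ S := by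
    refine le_trans ?_ (ENNReal.le_tsum 0)
    simpa using mul_le_mul_right (hgy 0) (ENNReal.ofReal t)
  calc edist (f x) (f z)
      ≤ edist (f (y 0)) (f x) + edist (f (y 0)) (f z) := edist_triangle_left _ _ _
    _ ≤ 6 * S + 3 * ENNReal.ofReal t * (g (y 0) + g z) := by
        gcongr
        exact (hfg _ (hyN 0) _ hzN).trans (by gcongr)
    _ = 6 * S + 3 * (ENNReal.ofReal t * g (y 0)) + 3 * (ENNReal.ofReal t * g z) := by ring
    _ ≤ 6 * S + 3 * S + 3 * (ENNReal.ofReal t * powerMean μ r (fun y => g y) x₀ t) := by gcongr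
    _ = _ := by ring

theorem measurable_laverage_ball {h : E → ℝ≥0∞} (hh : Measurable h) (s : ℝ) :
    Measurable fun x => ⨍⁻ y in ball x s, h y ∂μ := by
  have hball : MeasurableSet {q : E × E | q.2 ∈ ball q.1 s} :=
    measurableSet_lt (measurable_snd.dist measurable_fst) measurable_const
  simp only [setLAverage_eq, Measure.addHaar_ball_center, ← lintegral_indicator measurableSet_ball]
  exact (((hh.comp measurable_snd).indicator hball).lintegral_prod_right').div_const _

theorem measurable_powerMean (r : ℝ) {h : E → ℝ≥0∞} (hh : Measurable h) (s : ℝ) :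
    Measurable fun x => powerMean μ r h x s :=
  (measurable_laverage_ball μ (hh.pow_const r) s).pow_const _

theorem lintegral_laverage_ball_le {h : E → ℝ≥0∞} (hh : Measurable h) {s : ℝ} (hs : 0 < s)
    (x₀ : E) (t : ℝ) :
    ∫⁻ x in ball x₀ t, (⨍⁻ y in ball x s, h y ∂μ) ∂μ ≤ ∫⁻ y in ball x₀ (t + s), h y ∂μ := by
  set V := μ (ball (0 : E) s)
  have hV : V ≠ 0 := (measure_ball_pos μ _ hs).ne'
  have hVtop : V ≠ ⊤ := measure_ball_lt_top.ne
  have hball : MeasurableSet {q : E × E | q.2 ∈ ball q.1 s} :=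
    measurableSet_lt (measurable_snd.dist measurable_fst) measurable_const
  have hjoint : Measurable fun q : E × E => (ball q.1 s).indicator h q.2 :=
    (hh.comp measurable_snd).indicator hball
  have hinner (y : E) : ∫⁻ x in ball x₀ t, (ball x s).indicator h y ∂μ
      ≤ (ball x₀ (t + s)).indicator (fun y => V * h y) y := by
    calc ∫⁻ x in ball x₀ t, (ball x s).indicator h y ∂μ
        ≤ ∫⁻ x in ball x₀ t, (ball y s).indicator
            (fun _ => (ball x₀ (t + s)).indicator h y) x ∂μ := by
          refine setLIntegral_mono' measurableSet_ball fun x hx => ?_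
          by_cases hxy : x ∈ ball y s
          · have hyx₀ : y ∈ ball x₀ (t + s) :=
              mem_ball.2 (by linarith [dist_triangle_left y x₀ x, mem_ball.1 hx, mem_ball.1 hxy])
            simp [mem_ball_comm.1 hxy, hxy, hyx₀]
          · simp [mem_ball_comm.not.1 hxy]
      _ ≤ ∫⁻ _ in ball y s, (ball x₀ (t + s)).indicator h y ∂μ :=
          (setLIntegral_le_lintegral _ _).trans_eq (lintegral_indicator measurableSet_ball _)
      _ = _ := by
          rw [setLIntegral_const, Measure.addHaar_ball_center, mul_comm]
          by_cases hy : y ∈ ball x₀ (t + s) <;> simp [hy, V]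
  calc ∫⁻ x in ball x₀ t, (⨍⁻ y in ball x s, h y ∂μ) ∂μ
      = V⁻¹ * ∫⁻ x in ball x₀ t, (∫⁻ y, (ball x s).indicator h y ∂μ) ∂μ := by
        rw [← lintegral_const_mul' _ _ (ENNReal.inv_ne_top.2 hV)]
        simp only [setLAverage_eq, Measure.addHaar_ball_center, ENNReal.div_eq_inv_mul,
          lintegral_indicator measurableSet_ball, V]
    _ = V⁻¹ * ∫⁻ y, (∫⁻ x in ball x₀ t, (ball x s).indicator h y ∂μ) ∂μ := by
        rw [lintegral_lintegral_swap hjoint.aemeasurable]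
    _ ≤ V⁻¹ * ∫⁻ y, (ball x₀ (t + s)).indicator (fun y => V * h y) y ∂μ := by
        gcongr with y
        exact hinner y
    _ = _ := by
        rw [lintegral_indicator measurableSet_ball, lintegral_const_mul _ hh,
          ENNReal.inv_mul_cancel_left hV hVtop]

theorem laverage_powerMean_le {r : ℝ} (hr : 0 < r) (hr1 : r ≤ 1) {h : E → ℝ≥0∞}
    (hh : Measurable h) (x₀ : E) {s t : ℝ} (hs : 0 < s) (hst : s ≤ t) :
    ⨍⁻ x in ball x₀ t, powerMean μ r h x s ∂μ ≤ 2 ^ finrank ℝ E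
      * (ENNReal.ofReal (2 * t / s) ^ finrank ℝ E) ^ (1 / r - 1)
      * powerMean μ r h x₀ (2 * t) := by
  have ht : 0 < t := hs.trans_le hst
  have hr' : 0 ≤ 1 / r - 1 := sub_nonneg.2 ((one_le_div hr).2 hr1)
  set a : E → ℝ≥0∞ := fun x => ⨍⁻ y in ball x s, h y ^ r ∂μ
  set b : ℝ≥0∞ := ⨍⁻ y in ball x₀ (2 * t), h y ^ r ∂μ
  set c : ℝ≥0∞ := ENNReal.ofReal (2 * t / s) ^ finrank ℝ E
  have hsplit (v : ℝ≥0∞) : v ^ (1 / r) = v ^ (1 / r - 1) * v := by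
    nth_rw 3 [← ENNReal.rpow_one v]
    rw [← ENNReal.rpow_add_of_nonneg _ _ hr' zero_le_one, sub_add_cancel]
  have hpoint (x : E) (hx : x ∈ ball x₀ t) : a x ^ (1 / r) ≤ (c * b) ^ (1 / r - 1) * a x := by
    rw [hsplit]
    gcongr
    exact laverage_ball_le_of_subset μ hs (ball_subset_ball' (by linarith [mem_ball.1 hx])) _
  have hinteg : ∫⁻ x in ball x₀ t, a x ∂μ ≤ 2 ^ finrank ℝ E * μ (ball x₀ t) * b := by
    calc ∫⁻ x in ball x₀ t, a x ∂μ
        ≤ ∫⁻ y in ball x₀ (t + s), h y ^ r ∂μ :=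
          lintegral_laverage_ball_le μ (hh.pow_const r) hs x₀ t
      _ ≤ ∫⁻ y in ball x₀ (2 * t), h y ^ r ∂μ :=
          lintegral_mono_set (ball_subset_ball (by linarith))
      _ = μ (ball x₀ (2 * t)) * b := (measure_mul_setLAverage _ measure_ball_lt_top.ne).symm
      _ = _ := by
          rw [addHaar_ball_eq_ofReal_div_pow_mul μ x₀ x₀ ht (by positivity),
            mul_div_cancel_right₀ _ ht.ne', ENNReal.ofReal_ofNat]
  calc ⨍⁻ x in ball x₀ t, a x ^ (1 / r) ∂μ
      ≤ (∫⁻ x in ball x₀ t, (c * b) ^ (1 / r - 1) * a x ∂μ) / μ (ball x₀ t) := by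
        rw [setLAverage_eq]
        exact ENNReal.div_le_div_right (setLIntegral_mono' measurableSet_ball hpoint) _
    _ ≤ (c * b) ^ (1 / r - 1) * (2 ^ finrank ℝ E * μ (ball x₀ t) * b) / μ (ball x₀ t) := by
        rw [lintegral_const_mul _ (measurable_laverage_ball μ (hh.pow_const r) s)]
        gcongr
    _ = (c * b) ^ (1 / r - 1) * (2 ^ finrank ℝ E * b) := by
        rw [mul_right_comm (2 ^ _) (μ _), ← mul_assoc, ENNReal.mul_div_cancel_right
          (measure_ball_pos μ x₀ ht).ne' measure_ball_lt_top.ne]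
    _ = 2 ^ finrank ℝ E * c ^ (1 / r - 1) * b ^ (1 / r) := by
        rw [ENNReal.mul_rpow_of_nonneg _ _ hr', hsplit b]
        ring

theorem powerMean_le_powerMean_two_mul {r : ℝ} (hr : 0 < r) (h : E → ℝ≥0∞) (x : E) {t : ℝ}
    (ht : 0 < t) :
    powerMean μ r h x t ≤ (2 ^ finrank ℝ E) ^ (1 / r) * powerMean μ r h x (2 * t) := by
  rw [powerMean, powerMean, ← ENNReal.mul_rpow_of_nonneg _ _ (by positivity)]
  gcongr
  simpa [mul_div_cancel_right₀ _ ht.ne'] using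
    laverage_ball_le_of_subset μ ht (ball_subset_ball (by linarith : t ≤ 2 * t)) _

theorem ofReal_div_two_pow_mul_rpow_eq {t : ℝ} (ht : 0 < t) (d k : ℕ) {a : ℝ} (ha : 0 ≤ a) :
    ENNReal.ofReal (t / 2 ^ k) * (ENNReal.ofReal (2 * t / (t / 2 ^ k)) ^ d) ^ a
      = ENNReal.ofReal t * (2 ^ d) ^ a * (2⁻¹ * (2 ^ d) ^ a) ^ k := by
  have hratio : ENNReal.ofReal (2 * t / (t / 2 ^ k)) = 2 * 2 ^ k := by
    rw [show 2 * t / (t / 2 ^ k) = 2 * 2 ^ k by field_simp, ENNReal.ofReal_mul zero_le_two,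
      ENNReal.ofReal_pow zero_le_two, ENNReal.ofReal_ofNat]
  have hpow : ((2 * 2 ^ k : ℝ≥0∞) ^ d) ^ a = (2 ^ d) ^ a * ((2 ^ d) ^ a) ^ k := by
    rw [mul_pow, ← pow_mul, mul_comm k d, pow_mul, ENNReal.mul_rpow_of_nonneg _ _ ha,
      ← ENNReal.rpow_natCast (2 ^ d) k, ← ENNReal.rpow_mul, mul_comm (k : ℝ), ENNReal.rpow_mul,
      ENNReal.rpow_natCast]
  rw [hratio, hpow, ENNReal.ofReal_div_of_pos (by positivity), ENNReal.ofReal_pow zero_le_two,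
    ENNReal.ofReal_ofNat, div_eq_mul_inv, mul_pow, ← ENNReal.inv_pow]
  ring

theorem two_inv_mul_two_pow_rpow_lt_one {d : ℕ} {r : ℝ} (hr : (d : ℝ) / (d + 1) < r) :
    (2⁻¹ : ℝ≥0∞) * (2 ^ d) ^ (1 / r - 1) < 1 := by
  have hr0 : 0 < r := lt_of_le_of_lt (by positivity) hr
  rw [div_lt_iff₀ (by positivity)] at hr
  have hexp : (d : ℝ) * (1 / r - 1) < 1 := by
    rw [mul_sub, mul_one_div, sub_lt_iff_lt_add, div_lt_iff₀ hr0]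
    linarith
  rw [← ENNReal.rpow_natCast, ← ENNReal.rpow_mul]
  calc (2⁻¹ : ℝ≥0∞) * 2 ^ ((d : ℝ) * (1 / r - 1)) < 2⁻¹ * 2 ^ (1 : ℝ) := by
        refine ENNReal.mul_lt_mul_right (ENNReal.inv_ne_zero.2 ofNat_ne_top) (by simp) ?_
        exact ENNReal.rpow_lt_rpow_of_exponent_lt one_lt_two ofNat_ne_top hexp
    _ = 1 := by rw [ENNReal.rpow_one, ENNReal.inv_mul_cancel two_ne_zero ofNat_ne_top]

theorem laverage_ofReal_mul_powerMean_div_two_pow_le {r : ℝ} (hr : 0 < r) (hr1 : r ≤ 1)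
    {h : E → ℝ≥0∞} (hh : Measurable h) (x₀ : E) {t : ℝ} (ht : 0 < t) (k : ℕ) :
    ⨍⁻ x in ball x₀ t, ENNReal.ofReal (t / 2 ^ k) * powerMean μ r h x (t / 2 ^ k) ∂μ
      ≤ 2 ^ finrank ℝ E * (2 ^ finrank ℝ E) ^ (1 / r - 1)
        * (ENNReal.ofReal t * powerMean μ r h x₀ (2 * t))
        * (2⁻¹ * (2 ^ finrank ℝ E) ^ (1 / r - 1)) ^ k := by
  have hr' : 0 ≤ 1 / r - 1 := sub_nonneg.2 ((one_le_div hr).2 hr1)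
  set P := powerMean μ r h x₀ (2 * t)
  rw [laverage_const_mul _ (measurable_powerMean μ r hh _).aemeasurable]
  calc _ ≤ ENNReal.ofReal (t / 2 ^ k) * (2 ^ finrank ℝ E
        * (ENNReal.ofReal (2 * t / (t / 2 ^ k)) ^ finrank ℝ E) ^ (1 / r - 1) * P) :=
        mul_le_mul_right (laverage_powerMean_le μ hr hr1 hh x₀ (by positivity)
          (div_le_self ht.le (one_le_pow₀ one_le_two))) _
    _ = 2 ^ finrank ℝ E * P * (ENNReal.ofReal (t / 2 ^ k)
        * (ENNReal.ofReal (2 * t / (t / 2 ^ k)) ^ finrank ℝ E) ^ (1 / r - 1)) := by ring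
    _ = _ := by
        rw [ofReal_div_two_pow_mul_rpow_eq ht _ _ hr']
        ring

theorem exists_laverage_edist_le_powerMean {r : ℝ} (hr : (finrank ℝ E : ℝ) / (finrank ℝ E + 1) < r)
    (hr1 : r ≤ 1) :
    ∃ C : ℝ≥0∞, C ≠ ⊤ ∧ ∀ {Y : Type*} [PseudoEMetricSpace Y] {f : E → Y} {g : E → ℝ≥0},
      Measurable g → HasHajlaszGradient μ f g → ∀ (x₀ : E) {t : ℝ}, 0 < t →
      ∃ z, ⨍⁻ x in ball x₀ t, edist (f x) (f z) ∂μ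
        ≤ C * (ENNReal.ofReal t * powerMean μ r (fun y => g y) x₀ (2 * t)) := by
  have hr0 : 0 < r := lt_of_le_of_lt (by positivity) hr
  set D : ℝ≥0∞ := 2 ^ finrank ℝ E
  set ρ : ℝ≥0∞ := 2⁻¹ * D ^ (1 / r - 1)
  have hρ : (1 - ρ)⁻¹ ≠ ⊤ :=
    ENNReal.inv_ne_top.2 (tsub_pos_of_lt (two_inv_mul_two_pow_rpow_lt_one hr)).ne'
  refine ⟨9 * (D * D ^ (1 / r - 1) * (1 - ρ)⁻¹) + 3 * D ^ (1 / r), by finiteness, ?_⟩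
  rintro Y _ f g hg ⟨N, hN, hfg⟩ x₀ t ht
  obtain ⟨z, hz⟩ := exists_edist_le_tsum_powerMean μ hg hN hfg hr0 x₀ ht
  refine ⟨z, ?_⟩
  set h : E → ℝ≥0∞ := fun y => g y
  have hh : Measurable h := by fun_prop
  set P := powerMean μ r h x₀ (2 * t)
  set T : ℕ → E → ℝ≥0∞ := fun k x => ENNReal.ofReal (t / 2 ^ k) * powerMean μ r h x (t / 2 ^ k)
  have hT (k : ℕ) : Measurable (T k) := (measurable_powerMean μ r hh _).const_mul _
  have hae : ∀ᵐ x ∂μ.restrict (ball x₀ t), edist (f x) (f z)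
      ≤ 9 * ∑' k, T k x + 3 * (ENNReal.ofReal t * powerMean μ r h x₀ t) := by
    filter_upwards [ae_restrict_mem measurableSet_ball,
      ae_restrict_of_ae (measure_eq_zero_iff_ae_notMem.1 hN)]
      with x hx hxN using hz x hx hxN
  calc ⨍⁻ x in ball x₀ t, edist (f x) (f z) ∂μ
      ≤ ⨍⁻ x in ball x₀ t, (9 * ∑' k, T k x) ∂μ
          + 3 * (ENNReal.ofReal t * powerMean μ r h x₀ t) :=
        (laverage_mono_ae hae).trans (setLAverage_add_const_le _ _)
    _ = 9 * ∑' k, ⨍⁻ x in ball x₀ t, T k x ∂μ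
          + 3 * (ENNReal.ofReal t * powerMean μ r h x₀ t) := by
        rw [laverage_const_mul _ (Measurable.tsum hT).aemeasurable,
          laverage_tsum fun k => (hT k).aemeasurable]
    _ ≤ 9 * ∑' k, D * D ^ (1 / r - 1) * (ENNReal.ofReal t * P) * ρ ^ k
          + 3 * (ENNReal.ofReal t * (D ^ (1 / r) * P)) := by
        gcongr with k
        · exact laverage_ofReal_mul_powerMean_div_two_pow_le μ hr0 hr1 hh x₀ ht k
        · exact powerMean_le_powerMean_two_mul μ hr0 h x₀ ht
    _ = _ := by
        rw [ENNReal.tsum_mul_left, ENNReal.tsum_geometric]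
        ring

end HaarMeasure

/-! ### Convolution with dilated kernels -/

theorem hasCompactSupport_of_support_subset_ball {X : Type*} [SeminormedAddCommGroup X]
    [ProperSpace X] {k : X → ℝ} {R : ℝ} (hk : Function.support k ⊆ ball 0 R) :
    HasCompactSupport k :=
  .of_support_subset_isCompact (isCompact_closedBall 0 R) (hk.trans ball_subset_closedBall)

section Dilation

variable {E : Type*} [NormedAddCommGroup E] [NormedSpace ℝ E]

/-- The dilation `z ↦ s⁻ᵈ ψ(s⁻¹ z)` of a kernel to scale `s`, normalised to preserve integrals. -/
def dilation (ψ : E → ℝ) (s : ℝ) (z : E) : ℝ := (s⁻¹) ^ finrank ℝ E * ψ (s⁻¹ • z)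

theorem support_dilation_subset {ψ : E → ℝ} (hψ : Function.support ψ ⊆ ball 0 1) {s : ℝ}
    (hs : 0 < s) : Function.support (dilation ψ s) ⊆ ball 0 s := by
  intro z hz
  have hmem : s⁻¹ • z ∈ ball (0 : E) 1 := hψ (right_ne_zero_of_mul hz)
  rwa [mem_ball_zero_iff, norm_smul, norm_inv, Real.norm_of_nonneg hs.le, inv_mul_lt_iff₀ hs,
    mul_one, ← mem_ball_zero_iff] at hmem

theorem contDiff_dilation {ψ : E → ℝ} {m : WithTop ℕ∞} (hψ : ContDiff ℝ m ψ) (s : ℝ) :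
    ContDiff ℝ m (dilation ψ s) := by
  unfold dilation
  fun_prop

theorem continuous_dilation {ψ : E → ℝ} (hψ : Continuous ψ) (s : ℝ) :
    Continuous (dilation ψ s) := by
  unfold dilation
  fun_prop

theorem norm_dilation (ψ : E → ℝ) {s : ℝ} (hs : 0 < s) (z : E) :
    ‖dilation ψ s z‖ = dilation (fun y => ‖ψ y‖) s z := by
  rw [dilation, dilation, norm_mul, norm_pow, norm_inv, Real.norm_of_nonneg hs.le]

theorem fderiv_dilation_apply {ψ : E → ℝ} (hψ : Differentiable ℝ ψ) (s : ℝ) (z v : E) :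
    fderiv ℝ (dilation ψ s) z v = s⁻¹ * dilation (fun y => fderiv ℝ ψ y v) s z := by
  have hderiv := (((hψ (s⁻¹ • z)).hasFDerivAt.comp z
    ((hasFDerivAt_id z).const_smul s⁻¹)).const_mul ((s⁻¹) ^ finrank ℝ E)).fderiv
  change fderiv ℝ (dilation ψ s) z = _ at hderiv
  simp only [hderiv, dilation, smul_apply, ContinuousLinearMap.comp_apply,
    ContinuousLinearMap.id_apply, map_smul, smul_eq_mul]
  ring

theorem dist_dilation_le {ψ : E → ℝ} {L : ℝ≥0} (hψ : LipschitzWith L ψ) {s : ℝ} (hs : 0 < s)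
    (z w : E) :
    dist (dilation ψ s z) (dilation ψ s w) ≤ (s⁻¹) ^ finrank ℝ E * (L * (s⁻¹ * dist z w)) := by
  have hle := hψ.dist_le_mul (s⁻¹ • z) (s⁻¹ • w)
  rw [dist_smul₀, norm_inv, Real.norm_of_nonneg hs.le] at hle
  rw [Real.dist_eq, dilation, dilation, ← mul_sub, abs_mul, abs_of_pos (by positivity),
    ← Real.dist_eq]
  gcongr

theorem support_fderiv_apply_subset (ψ : E → ℝ) (v : E) :
    Function.support (fun z => fderiv ℝ ψ z v) ⊆ tsupport ψ := fun _ hz =>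
  support_fderiv_subset ℝ fun h => hz (by simp [h])

end Dilation

section ConvolutionSub

open scoped Convolution

variable {G F F' F'' : Type*} [AddGroup G] [MeasurableSpace G] {μ : Measure G}
  [NormedAddCommGroup F] [NormedSpace ℝ F] [NormedAddCommGroup F'] [NormedSpace ℝ F']
  [NormedAddCommGroup F''] [NormedSpace ℝ F''] {L : F →L[ℝ] F' →L[ℝ] F''}

theorem convolution_sub {f : G → F} {k l : G → F'} (hk : ConvolutionExists f k L μ)
    (hl : ConvolutionExists f l L μ) : f ⋆[L, μ] (k - l) = f ⋆[L, μ] k - f ⋆[L, μ] l := by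
  ext x
  simp only [convolution, Pi.sub_apply, map_sub]
  exact integral_sub (hk x) (hl x)

theorem sub_convolution {f g : G → F} {k : G → F'} (hf : ConvolutionExists f k L μ)
    (hg : ConvolutionExists g k L μ) : (f - g) ⋆[L, μ] k = f ⋆[L, μ] k - g ⋆[L, μ] k := by
  ext x
  simp only [convolution, Pi.sub_apply, map_sub, sub_apply]
  exact integral_sub (hf x) (hg x)

end ConvolutionSub

section Mollifier

open scoped Convolution

variable {E : Type*} [NormedAddCommGroup E] [NormedSpace ℝ E] [MeasurableSpace E] (μ : Measure E)

/-- A mollifier: a `C¹` kernel of integral one, supported in the open unit ball. -/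
structure IsMollifier (ψ : E → ℝ) : Prop where
  contDiff : ContDiff ℝ 1 ψ
  tsupport_subset : tsupport ψ ⊆ ball 0 1
  integral_eq_one : ∫ z, ψ z ∂μ = 1

/-- The directional derivative `∂ᵥ(f ⋆ ψₛ) = f ⋆ ∂ᵥψₛ` of the mollification of `f` at scale `s`. -/
def mollifiedDeriv (ψ f : E → ℝ) (v : E) (s : ℝ) : E → ℝ :=
  f ⋆[ContinuousLinearMap.mul ℝ ℝ, μ] fun z => fderiv ℝ (dilation ψ s) z v

/-- The radial maximal function of the distributional derivative of `f` in direction `v`. -/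
def derivMaximalFunction (ψ f : E → ℝ) (v x : E) : ℝ≥0∞ :=
  ⨆ s : {s : ℝ // 0 < s}, ‖mollifiedDeriv μ ψ f v s x‖ₑ

/-- The kernel `ψₛ - ψₛ ⋆ ψₐ`, which measures the error made by mollifying `ψₛ` at scale `a`. -/
def mollificationDefect (ψ : E → ℝ) (s a : ℝ) : E → ℝ :=
  dilation ψ s - dilation ψ s ⋆[ContinuousLinearMap.mul ℝ ℝ, μ] dilation ψ a

theorem enorm_mollifiedDeriv_le_derivMaximalFunction (ψ f : E → ℝ) (v x : E) {s : ℝ}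
    (hs : 0 < s) : ‖mollifiedDeriv μ ψ f v s x‖ₑ ≤ derivMaximalFunction μ ψ f v x :=
  le_iSup (fun s : {s : ℝ // 0 < s} => ‖mollifiedDeriv μ ψ f v s x‖ₑ) ⟨s, hs⟩

theorem mollifiedDeriv_eq_inv_mul_convolution {ψ : E → ℝ} (hψ : Differentiable ℝ ψ) (f : E → ℝ)
    (v : E) (s : ℝ) (x : E) :
    mollifiedDeriv μ ψ f v s x =
      s⁻¹ * (f ⋆[ContinuousLinearMap.mul ℝ ℝ, μ] dilation (fun z => fderiv ℝ ψ z v) s) x := by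
  simp only [mollifiedDeriv, convolution_mul, fderiv_dilation_apply hψ, mul_left_comm _ s⁻¹]
  exact integral_const_mul _ _

namespace IsMollifier

variable {μ} {ψ : E → ℝ} {s : ℝ}

theorem continuous (hψ : IsMollifier μ ψ) : Continuous ψ :=
  hψ.contDiff.continuous

theorem differentiable (hψ : IsMollifier μ ψ) : Differentiable ℝ ψ :=
  hψ.contDiff.differentiable one_ne_zero

theorem support_subset (hψ : IsMollifier μ ψ) : Function.support ψ ⊆ ball 0 1 :=
  subset_closure.trans hψ.tsupport_subset

theorem support_dilation_subset (hψ : IsMollifier μ ψ) (hs : 0 < s) :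
    Function.support (dilation ψ s) ⊆ ball 0 s :=
  _root_.support_dilation_subset hψ.support_subset hs

theorem continuous_dilation (hψ : IsMollifier μ ψ) (s : ℝ) : Continuous (dilation ψ s) :=
  _root_.continuous_dilation hψ.continuous s

theorem continuous_fderiv_apply (hψ : IsMollifier μ ψ) (v : E) :
    Continuous fun z => fderiv ℝ ψ z v :=
  (hψ.contDiff.continuous_fderiv one_ne_zero).clm_apply continuous_const

theorem continuous_fderiv_dilation_apply (hψ : IsMollifier μ ψ) (s : ℝ) (v : E) :
    Continuous fun z => fderiv ℝ (dilation ψ s) z v :=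
  ((contDiff_dilation hψ.contDiff s).continuous_fderiv one_ne_zero).clm_apply continuous_const

open scoped Pointwise in
theorem support_mollificationDefect_subset {a : ℝ} (hψ : IsMollifier μ ψ) (ha : 0 < a)
    (has : a ≤ s) :
    Function.support (mollificationDefect μ ψ s a) ⊆ ball 0 (2 * s) := by
  have hs : 0 < s := ha.trans_le has
  have hsum : Function.support (dilation ψ s) + Function.support (dilation ψ a) ⊆ ball 0 (2 * s) :=
    calc Function.support (dilation ψ s) + Function.support (dilation ψ a)
        ⊆ ball 0 s + ball 0 a :=
          add_subset_add (hψ.support_dilation_subset hs) (hψ.support_dilation_subset ha)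
      _ = ball 0 (s + a) := by rw [ball_add_ball hs ha, add_zero]
      _ ⊆ ball 0 (2 * s) := ball_subset_ball (by linarith)
  refine (Function.support_sub _ _).trans (union_subset ?_ ?_)
  · exact (hψ.support_dilation_subset hs).trans (ball_subset_ball (by linarith))
  · exact (support_convolution_subset _).trans hsum

theorem hasCompactSupport_dilation [FiniteDimensional ℝ E] (hψ : IsMollifier μ ψ)
    (hs : 0 < s) : HasCompactSupport (dilation ψ s) :=
  hasCompactSupport_of_support_subset_ball (hψ.support_dilation_subset hs)

theorem hasCompactSupport_fderiv_dilation_apply [FiniteDimensional ℝ E]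
    (hψ : IsMollifier μ ψ) (hs : 0 < s) (v : E) :
    HasCompactSupport fun z => fderiv ℝ (dilation ψ s) z v :=
  (hψ.hasCompactSupport_dilation hs).fderiv_apply ℝ v

theorem continuous_convolution_dilation [FiniteDimensional ℝ E] [BorelSpace E] {f : E → ℝ}
    (hψ : IsMollifier μ ψ) (hf : LocallyIntegrable f μ) (hs : 0 < s) :
    Continuous (f ⋆[ContinuousLinearMap.mul ℝ ℝ, μ] dilation ψ s) :=
  (hψ.hasCompactSupport_dilation hs).continuous_convolution_right _ hf (hψ.continuous_dilation s)

theorem continuous_mollifiedDeriv [FiniteDimensional ℝ E] [BorelSpace E] {f : E → ℝ}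
    (hψ : IsMollifier μ ψ) (hf : LocallyIntegrable f μ) (v : E) (hs : 0 < s) :
    Continuous (mollifiedDeriv μ ψ f v s) :=
  (hψ.hasCompactSupport_fderiv_dilation_apply hs v).continuous_convolution_right _ hf
    (hψ.continuous_fderiv_dilation_apply s v)

theorem measurable_derivMaximalFunction [FiniteDimensional ℝ E] [BorelSpace E] {f : E → ℝ}
    (hψ : IsMollifier μ ψ) (hf : LocallyIntegrable f μ) (v : E) :
    Measurable (derivMaximalFunction μ ψ f v) :=
  (lowerSemicontinuous_iSup fun s : {s : ℝ // 0 < s} =>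
    (hψ.continuous_mollifiedDeriv hf v s.2).enorm.lowerSemicontinuous).measurable

end IsMollifier

end Mollifier

section Convolution

variable {E : Type*} [NormedAddCommGroup E] [NormedSpace ℝ E] [FiniteDimensional ℝ E]
  [MeasurableSpace E] [BorelSpace E] (μ : Measure E) [μ.IsAddHaarMeasure]

local notation:67 f:67 "⋆" k:68 => convolution f k (ContinuousLinearMap.mul ℝ ℝ) μ

theorem convolution_mul_comm (f k : E → ℝ) : f ⋆ k = k ⋆ f := by
  ext x
  rw [convolution_mul_swap, convolution_mul]
  simp only [mul_comm]

theorem convolution_mul_assoc {f k l : E → ℝ} (hf : LocallyIntegrable f μ) (hk : Continuous k)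
    (hkc : HasCompactSupport k) (hl : Continuous l) (hlc : HasCompactSupport l) :
    (f ⋆ k) ⋆ l = f ⋆ (k ⋆ l) := by
  ext x
  refine convolution_assoc _ _ _ _ (fun a b c => mul_assoc a b c) hf.aestronglyMeasurable
    hk.aestronglyMeasurable hl.aestronglyMeasurable
    (.of_forall fun y => hkc.convolutionExists_right _ hf hk y)
    (.of_forall fun y =>
      hlc.norm.convolutionExists_right _ hk.norm.locallyIntegrable hl.norm y) ?_
  exact HasCompactSupport.convolutionExists_right _
    (HasCompactSupport.convolution _ hkc.norm hlc.norm) (fun y => (hf y).norm)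
    (hlc.norm.continuous_convolution_right _ hk.norm.locallyIntegrable hl.norm) x

theorem hasFDerivAt_convolution_mul {f k : E → ℝ} (hf : LocallyIntegrable f μ)
    (hk : ContDiff ℝ 1 k) (hkc : HasCompactSupport k) (x : E) :
    ∃ D : E →L[ℝ] ℝ, HasFDerivAt (f ⋆ k) D x ∧ ∀ v, D v = (f ⋆ fun z => fderiv ℝ k z v) x :=
  ⟨_, hkc.hasFDerivAt_convolution_right _ hf hk x, fun v =>
    convolution_precompR_apply _ hf (hkc.fderiv ℝ) (hk.continuous_fderiv one_ne_zero) x v⟩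

theorem convolution_fderiv_eq_fderiv_convolution {k l : E → ℝ} (hk : ContDiff ℝ 1 k)
    (hkc : HasCompactSupport k) (hl : ContDiff ℝ 1 l) (hlc : HasCompactSupport l) (v : E) :
    (k ⋆ fun z => fderiv ℝ l z v) = (fun z => fderiv ℝ k z v) ⋆ l := by
  ext x
  obtain ⟨D, hD, hDv⟩ := hasFDerivAt_convolution_mul μ hk.continuous.locallyIntegrable hl hlc x
  obtain ⟨D', hD', hDv'⟩ := hasFDerivAt_convolution_mul μ hl.continuous.locallyIntegrable hk hkc x
  rw [convolution_mul_comm] at hD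
  rw [convolution_mul_comm μ (fun z => fderiv ℝ k z v), ← hDv, ← hDv', hD.unique hD']

theorem integral_fderiv_apply_eq_zero {k : E → ℝ} (hk : ContDiff ℝ 1 k)
    (hkc : HasCompactSupport k) (v : E) : ∫ z, fderiv ℝ k z v ∂μ = 0 := by
  have hderiv : Integrable (fun z => fderiv ℝ k z v) μ :=
    ((hk.continuous_fderiv one_ne_zero).clm_apply continuous_const).integrable_of_hasCompactSupport
      (hkc.fderiv_apply ℝ v)
  simpa using integral_mul_fderiv_eq_neg_fderiv_mul_of_integrable (μ := μ)
    (f := fun _ : E => (1 : ℝ)) (g := k) (v := v) (by simp) (by simpa using hderiv)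
    (by simpa using hk.continuous.integrable_of_hasCompactSupport hkc) (by fun_prop)
    (fun x _ => hk.differentiable one_ne_zero x)

theorem convolution_sub_const_of_integral_eq_zero {f k : E → ℝ} (hf : LocallyIntegrable f μ)
    (hk : Continuous k) (hkc : HasCompactSupport k) (hinteg : ∫ z, k z ∂μ = 0) (c : ℝ) :
    (f - fun _ => c) ⋆ k = f ⋆ k := by
  rw [sub_convolution (hkc.convolutionExists_right _ hf hk)
    (hkc.convolutionExists_right _ (locallyIntegrable_const c) hk)]
  ext x
  simp only [Pi.sub_apply, convolution_mul, integral_const_mul]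
  rw [integral_sub_left_eq_self k, hinteg, mul_zero, sub_zero]

theorem dist_convolution_le_of_integral_eq_one {u k : E → ℝ} {R : ℝ} (hk : Integrable k μ)
    (hsupp : Function.support k ⊆ ball 0 R) (hinteg : ∫ z, k z ∂μ = 1)
    (hu : AEStronglyMeasurable u μ) {x : E} {c ε : ℝ} (hε : 0 ≤ ε)
    (hclose : ∀ z ∈ ball x R, dist (u z) c ≤ ε) :
    dist ((u ⋆ k) x) c ≤ (∫ z, ‖k z‖ ∂μ) * ε := by
  have hle := dist_convolution_le' (ContinuousLinearMap.mul ℝ ℝ) hε hk hsupp hu hclose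
  rwa [← convolution_mul_comm, ContinuousLinearMap.opNorm_mul, one_mul,
    funext fun t => ContinuousLinearMap.mul_apply' ℝ ℝ (k t) c, integral_mul_const, hinteg,
    one_mul] at hle

theorem enorm_convolution_le_laverage {k : E → ℝ} {R : ℝ} (hR : 0 < R) {K : ℝ≥0∞}
    (hKtop : K ≠ ⊤) (hsupp : Function.support k ⊆ ball 0 R)
    (hK : ∀ z, ‖k z‖ₑ * μ (ball 0 R) ≤ K)
    (f : E → ℝ) (x : E) : ‖(f ⋆ k) x‖ₑ ≤ K * ⨍⁻ y in ball x R, ‖f y‖ₑ ∂μ := by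
  have hV : μ (ball (0 : E) R) ≠ 0 := (measure_ball_pos μ _ hR).ne'
  have hVtop : μ (ball (0 : E) R) ≠ ⊤ := measure_ball_lt_top.ne
  calc ‖(f ⋆ k) x‖ₑ
      ≤ ∫⁻ y, ‖f y * k (x - y)‖ₑ ∂μ := by
        rw [convolution_mul]
        exact enorm_integral_le_lintegral_enorm _
    _ ≤ ∫⁻ y, (ball x R).indicator (fun y => K / μ (ball 0 R) * ‖f y‖ₑ) y ∂μ := by
        refine lintegral_mono fun y => ?_
        by_cases hy : y ∈ ball x R
        · rw [indicator_of_mem hy, enorm_mul, mul_comm]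
          exact mul_le_mul_left ((ENNReal.le_div_iff_mul_le (.inl hV) (.inl hVtop)).2 (hK _)) _
        · have hxy : x - y ∉ ball (0 : E) R := by
            rwa [mem_ball_zero_iff, ← dist_eq_norm, ← mem_ball']
          simp [Function.notMem_support.1 fun h => hxy (hsupp h)]
    _ = K / μ (ball 0 R) * ∫⁻ y in ball x R, ‖f y‖ₑ ∂μ := by
        rw [lintegral_indicator measurableSet_ball,
          lintegral_const_mul' _ _ (ENNReal.div_ne_top hKtop hV)]
    _ = _ := by
        rw [setLAverage_eq, Measure.addHaar_ball_center μ x, div_eq_mul_inv, div_eq_mul_inv,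
          mul_assoc, mul_comm (_)⁻¹]

theorem integral_dilation (ψ : E → ℝ) {s : ℝ} (hs : 0 < s) :
    ∫ z, dilation ψ s z ∂μ = ∫ z, ψ z ∂μ := by
  unfold dilation
  rw [integral_const_mul, Measure.integral_comp_inv_smul_of_nonneg μ ψ hs.le, smul_eq_mul,
    ← mul_assoc, ← mul_pow, inv_mul_cancel₀ hs.ne', one_pow, one_mul]

theorem enorm_dilation_mul_addHaar_ball (ψ : E → ℝ) {s : ℝ} (hs : 0 < s) (z : E) :
    ‖dilation ψ s z‖ₑ * μ (ball 0 s) = ‖ψ (s⁻¹ • z)‖ₑ * μ (ball 0 1) := by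
  rw [addHaar_ball_eq_ofReal_div_pow_mul μ 0 0 one_pos hs, div_one, dilation, enorm_mul,
    enorm_pow, Real.enorm_of_nonneg (inv_nonneg.2 hs.le), ENNReal.ofReal_inv_of_pos hs,
    mul_mul_mul_comm, ← mul_pow, ENNReal.inv_mul_cancel (by simpa using hs) ofReal_ne_top,
    one_pow, one_mul]

theorem exists_enorm_convolution_dilation_le_laverage {k : E → ℝ} (hk : Continuous k)
    (hsupp : Function.support k ⊆ ball 0 1) :
    ∃ K ≠ ⊤, ∀ (f : E → ℝ) (x : E) {s : ℝ}, 0 < s →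
      ‖(f ⋆ dilation k s) x‖ₑ ≤ K * ⨍⁻ y in ball x s, ‖f y‖ₑ ∂μ := by
  obtain ⟨B, hB⟩ :=
    (hasCompactSupport_of_support_subset_ball hsupp).exists_bound_of_continuous hk
  have hK : ENNReal.ofReal B * μ (ball 0 1) ≠ ⊤ := mul_ne_top ofReal_ne_top measure_ball_lt_top.ne
  refine ⟨ENNReal.ofReal B * μ (ball 0 1), hK, fun f x s hs =>
    enorm_convolution_le_laverage μ hs hK (support_dilation_subset hsupp hs) (fun z => ?_) f x⟩
  rw [enorm_dilation_mul_addHaar_ball μ k hs, ← ofReal_norm]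
  exact mul_le_mul_left (ENNReal.ofReal_le_ofReal (hB _)) _

/-! ### Mollified derivatives and their maximal function -/

namespace IsMollifier

variable {μ} {ψ f : E → ℝ} {s : ℝ}

theorem integrable_dilation (hψ : IsMollifier μ ψ) (hs : 0 < s) :
    Integrable (dilation ψ s) μ :=
  (hψ.continuous_dilation s).integrable_of_hasCompactSupport (hψ.hasCompactSupport_dilation hs)

theorem integral_dilation_eq_one (hψ : IsMollifier μ ψ) (hs : 0 < s) :
    ∫ z, dilation ψ s z ∂μ = 1 := by
  rw [integral_dilation μ ψ hs, hψ.integral_eq_one]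

theorem mollifiedDeriv_sub_const (hψ : IsMollifier μ ψ) (hf : LocallyIntegrable f μ) (v : E)
    (hs : 0 < s) (c : ℝ) :
    mollifiedDeriv μ ψ (f - fun _ => c) v s = mollifiedDeriv μ ψ f v s :=
  convolution_sub_const_of_integral_eq_zero μ hf (hψ.continuous_fderiv_dilation_apply s v)
    (hψ.hasCompactSupport_fderiv_dilation_apply hs v)
    (integral_fderiv_apply_eq_zero μ (contDiff_dilation hψ.contDiff s)
      (hψ.hasCompactSupport_dilation hs) v) c

theorem exists_enorm_mollifiedDeriv_le_laverage (hψ : IsMollifier μ ψ) (v : E) :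
    ∃ K ≠ ⊤, ∀ (f : E → ℝ) (x : E) {s : ℝ}, 0 < s →
      ‖mollifiedDeriv μ ψ f v s x‖ₑ
        ≤ (ENNReal.ofReal s)⁻¹ * (K * ⨍⁻ y in ball x s, ‖f y‖ₑ ∂μ) := by
  obtain ⟨K, hK, hle⟩ := exists_enorm_convolution_dilation_le_laverage μ
    (hψ.continuous_fderiv_apply v) ((support_fderiv_apply_subset ψ v).trans hψ.tsupport_subset)
  refine ⟨K, hK, fun f x s hs => ?_⟩
  rw [mollifiedDeriv_eq_inv_mul_convolution μ hψ.differentiable, enorm_mul,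
    Real.enorm_of_nonneg (inv_nonneg.2 hs.le), ENNReal.ofReal_inv_of_pos hs]
  exact mul_le_mul_right (hle f x hs) _

theorem exists_derivMaximalFunction_le_powerMaximalFunction (hψ : IsMollifier μ ψ) {r : ℝ}
    (hr : (finrank ℝ E : ℝ) / (finrank ℝ E + 1) < r) (hr1 : r ≤ 1) (v : E) :
    ∃ C ≠ ⊤, ∀ {f : E → ℝ} {g : E → ℝ≥0}, LocallyIntegrable f μ → Measurable g →
      HasHajlaszGradient μ f g → ∀ x,
        derivMaximalFunction μ ψ f v x ≤ C * powerMaximalFunction μ r (fun y => g y) x := by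
  have hr0 : 0 < r := lt_of_le_of_lt (by positivity) hr
  obtain ⟨K, hK, hkernel⟩ := hψ.exists_enorm_mollifiedDeriv_le_laverage v
  obtain ⟨C, hC, hpoincare⟩ := exists_laverage_edist_le_powerMean μ hr hr1
  refine ⟨K * C, by finiteness, fun {f g} hf hg hfg x => iSup_le fun ⟨s, hs⟩ => ?_⟩
  obtain ⟨z, hz⟩ := hpoincare hg hfg x hs
  have hmean : powerMean μ r (fun y => g y) x (2 * s) ≤ powerMaximalFunction μ r (fun y => g y) x :=
    powerMean_le_powerMaximalFunction μ hr0 _ (mem_ball_self (by positivity))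
  calc ‖mollifiedDeriv μ ψ f v s x‖ₑ
      = ‖mollifiedDeriv μ ψ (f - fun _ => f z) v s x‖ₑ := by
        rw [hψ.mollifiedDeriv_sub_const hf v hs]
    _ ≤ (ENNReal.ofReal s)⁻¹ * (K * ⨍⁻ y in ball x s, edist (f y) (f z) ∂μ) := by
        simp only [edist_eq_enorm_sub]
        exact hkernel (f - fun _ => f z) x hs
    _ ≤ (ENNReal.ofReal s)⁻¹ * (K * (C * (ENNReal.ofReal s *
          powerMaximalFunction μ r (fun y => g y) x))) := by gcongr; exact hz.trans (by gcongr)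
    _ = K * C * powerMaximalFunction μ r (fun y => g y) x := by
        rw [mul_left_comm C, mul_left_comm K, ENNReal.inv_mul_cancel_left (by simpa using hs)
          ofReal_ne_top, mul_assoc]

end IsMollifier

/-- A family `u` of continuous functions which behaves like the mollifications `F ⋆ ψₛ` of a
distribution `F`: mollifying `u s` at scale `a` gives the same as mollifying `u a` at scale `s`. -/
structure IsMollification (ψ : E → ℝ) (u : ℝ → E → ℝ) : Prop where
  continuous : ∀ {s}, 0 < s → Continuous (u s)
  convolution_comm : ∀ {s a}, 0 < s → 0 < a → u s ⋆ dilation ψ a = u a ⋆ dilation ψ s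

namespace IsMollifier

variable {μ} {ψ f : E → ℝ}

theorem isMollification_convolution (hψ : IsMollifier μ ψ) (hf : LocallyIntegrable f μ) :
    IsMollification μ ψ fun s => f ⋆ dilation ψ s where
  continuous hs := hψ.continuous_convolution_dilation hf hs
  convolution_comm hs ha := by
    rw [convolution_mul_assoc μ hf (hψ.continuous_dilation _) (hψ.hasCompactSupport_dilation hs)
        (hψ.continuous_dilation _) (hψ.hasCompactSupport_dilation ha),
      convolution_mul_assoc μ hf (hψ.continuous_dilation _) (hψ.hasCompactSupport_dilation ha)
        (hψ.continuous_dilation _) (hψ.hasCompactSupport_dilation hs),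
      convolution_mul_comm μ (dilation ψ _)]

theorem isMollification_mollifiedDeriv (hψ : IsMollifier μ ψ) (hf : LocallyIntegrable f μ)
    (v : E) : IsMollification μ ψ (mollifiedDeriv μ ψ f v) where
  continuous hs := hψ.continuous_mollifiedDeriv hf v hs
  convolution_comm hs ha := by
    rw [mollifiedDeriv, mollifiedDeriv,
      convolution_mul_assoc μ hf (hψ.continuous_fderiv_dilation_apply _ v)
        (hψ.hasCompactSupport_fderiv_dilation_apply hs v) (hψ.continuous_dilation _)
        (hψ.hasCompactSupport_dilation ha),
      convolution_mul_assoc μ hf (hψ.continuous_fderiv_dilation_apply _ v)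
        (hψ.hasCompactSupport_fderiv_dilation_apply ha v) (hψ.continuous_dilation _)
        (hψ.hasCompactSupport_dilation hs),
      ← convolution_fderiv_eq_fderiv_convolution μ (contDiff_dilation hψ.contDiff _)
        (hψ.hasCompactSupport_dilation hs) (contDiff_dilation hψ.contDiff _)
        (hψ.hasCompactSupport_dilation ha),
      convolution_mul_comm μ (dilation ψ _)]

end IsMollifier

/-! ### The sub-mean value property of mollifications -/

/-- The approximation `w ⋆ (2ψₐ - ψₐ ⋆ ψₐ)` of `w`, whose error `w ⋆ (δ - ψₐ) ⋆ (δ - ψₐ)` is of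
second order in `δ - ψₐ`. -/
def secondOrderMollification (ψ w : E → ℝ) (a : ℝ) : E → ℝ :=
  w ⋆ dilation ψ a + (w ⋆ dilation ψ a - (w ⋆ dilation ψ a) ⋆ dilation ψ a)

namespace IsMollifier

variable {μ} {ψ : E → ℝ} {s a : ℝ}

theorem dist_convolution_dilation_le (hψ : IsMollifier μ ψ) (ha : 0 < a) {w : E → ℝ}
    (hw : Continuous w) {x : E} {c ε : ℝ} (hε : 0 ≤ ε) (hclose : ∀ z ∈ ball x a, dist (w z) c ≤ ε) :
    dist ((w ⋆ dilation ψ a) x) c ≤ (∫ z, ‖ψ z‖ ∂μ) * ε := by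
  have hle := dist_convolution_le_of_integral_eq_one μ (hψ.integrable_dilation ha)
    (hψ.support_dilation_subset ha) (hψ.integral_dilation_eq_one ha) hw.aestronglyMeasurable hε
    hclose
  simpa only [norm_dilation ψ ha, integral_dilation μ _ ha] using hle

theorem exists_enorm_mollificationDefect_mul_addHaar_ball_le (hψ : IsMollifier μ ψ) :
    ∃ K ≠ ⊤, ∀ {s a : ℝ}, 0 < s → 0 < a → ∀ z,
      ‖mollificationDefect μ ψ s a z‖ₑ * μ (ball 0 (2 * s)) ≤ K * ENNReal.ofReal (a / s) := by
  obtain ⟨L, hL⟩ := hψ.contDiff.lipschitzWith_of_hasCompactSupport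
    (hasCompactSupport_of_support_subset_ball hψ.support_subset) one_ne_zero
  set I : ℝ := ∫ z, ‖ψ z‖ ∂μ
  have : 0 ≤ I := integral_nonneg fun _ => norm_nonneg _
  refine ⟨ENNReal.ofReal (I * L * 2 ^ finrank ℝ E) * μ (ball 0 1),
    mul_ne_top ofReal_ne_top measure_ball_lt_top.ne, fun {s a} hs ha z => ?_⟩
  have hdefect : ‖mollificationDefect μ ψ s a z‖ ≤
      I * ((s⁻¹) ^ finrank ℝ E * (L * (s⁻¹ * a))) := by
    rw [mollificationDefect, Pi.sub_apply, ← dist_eq_norm, dist_comm]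
    refine hψ.dist_convolution_dilation_le ha (hψ.continuous_dilation s) (by positivity)
      fun w hw => (dist_dilation_le hL hs w z).trans ?_
    gcongr
    exact (mem_ball.1 hw).le
  have hscale : I * ((s⁻¹) ^ finrank ℝ E * (L * (s⁻¹ * a))) * (2 * s) ^ finrank ℝ E =
      I * L * 2 ^ finrank ℝ E * (a / s) := by
    rw [inv_pow, mul_pow]
    field_simp
  calc ‖mollificationDefect μ ψ s a z‖ₑ * μ (ball 0 (2 * s))
      ≤ ENNReal.ofReal (I * ((s⁻¹) ^ finrank ℝ E * (L * (s⁻¹ * a)))) * (ENNReal.ofReal (2 * s)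
          ^ finrank ℝ E * μ (ball 0 1)) := by
        rw [addHaar_ball_eq_ofReal_div_pow_mul μ 0 0 one_pos (by positivity : 0 < 2 * s), div_one,
          ← ofReal_norm]
        exact mul_le_mul_left (ENNReal.ofReal_le_ofReal hdefect) _
    _ = _ := by
        rw [← ENNReal.ofReal_pow (by positivity), ← mul_assoc, ← ENNReal.ofReal_mul (by positivity),
          hscale, ENNReal.ofReal_mul (by positivity), mul_right_comm]

theorem exists_enorm_convolution_mollificationDefect_le (hψ : IsMollifier μ ψ) :
    ∃ K ≠ ⊤, ∀ (u : E → ℝ) (y : E) {s a : ℝ}, 0 < a → a ≤ s →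
      ‖(u ⋆ mollificationDefect μ ψ s a) y‖ₑ ≤
        K * ENNReal.ofReal (a / s) * ⨍⁻ z in ball y (2 * s), ‖u z‖ₑ ∂μ := by
  obtain ⟨K, hK, hle⟩ := hψ.exists_enorm_mollificationDefect_mul_addHaar_ball_le
  refine ⟨K, hK, fun u y {s a} ha has => ?_⟩
  have hs : 0 < s := ha.trans_le has
  exact enorm_convolution_le_laverage μ (by positivity) (by finiteness)
    (hψ.support_mollificationDefect_subset ha has) (hle hs ha) u y

theorem convolution_mollificationDefect (hψ : IsMollifier μ ψ) {u : E → ℝ}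
    (hu : LocallyIntegrable u μ) (hs : 0 < s) (ha : 0 < a) :
    u ⋆ mollificationDefect μ ψ s a =
      u ⋆ dilation ψ s - (u ⋆ dilation ψ s) ⋆ dilation ψ a := by
  have hs_cont := hψ.continuous_dilation s
  have hs_supp := hψ.hasCompactSupport_dilation hs
  rw [mollificationDefect, convolution_sub (hs_supp.convolutionExists_right _ hu hs_cont)
      ((hs_supp.convolution _ (hψ.hasCompactSupport_dilation ha)).convolutionExists_right _ hu
        (hψ.continuous_convolution_dilation hs_cont.locallyIntegrable ha)),
    convolution_mul_assoc μ hu hs_cont hs_supp (hψ.continuous_dilation a)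
      (hψ.hasCompactSupport_dilation ha)]

theorem tendsto_convolution_dilation (hψ : IsMollifier μ ψ) {W : ℝ → E → ℝ} {y : E} {c : ℝ}
    (hW : ∀ a, 0 < a → Continuous (W a))
    (hlim : Tendsto (Function.uncurry W) (𝓝[>] 0 ×ˢ 𝓝 y) (𝓝 c)) :
    Tendsto (Function.uncurry fun a => W a ⋆ dilation ψ a) (𝓝[>] 0 ×ˢ 𝓝 y) (𝓝 c) := by
  have hI0 : 0 ≤ ∫ z, ‖ψ z‖ ∂μ := integral_nonneg fun _ => norm_nonneg _
  rw [Metric.tendsto_nhds] at hlim ⊢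
  intro ε hε
  obtain ⟨p, hp, q, hq, hpq⟩ := eventually_prod_iff.1
    (hlim (ε / ((∫ z, ‖ψ z‖ ∂μ) + 1)) (by positivity))
  obtain ⟨δ, hδ, hball⟩ := Metric.eventually_nhds_iff_ball.1 hq
  have hsmall : ∀ᶠ a in 𝓝[>] (0 : ℝ), p a ∧ a ∈ Ioo 0 (δ / 2) :=
    hp.and (Ioo_mem_nhdsGT (by positivity))
  refine (hsmall.prod_mk (ball_mem_nhds y (half_pos hδ))).mono ?_
  rintro ⟨a, z⟩ ⟨⟨hpa, ha0, haδ⟩, hz⟩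
  refine (hψ.dist_convolution_dilation_le ha0 (hW a ha0) (by positivity) fun w hw =>
    (hpq hpa (hball w ?_)).le).trans_lt ?_
  · exact ball_subset_ball' (by linarith [mem_ball.1 hz]) hw
  · rw [← mul_div_assoc, div_lt_iff₀ (by positivity)]
    nlinarith

theorem tendsto_secondOrderMollification (hψ : IsMollifier μ ψ) {w : E → ℝ} (hw : Continuous w)
    (y : E) : Tendsto (fun a => secondOrderMollification μ ψ w a y) (𝓝[>] 0) (𝓝 (w y)) := by
  have hfirst := hψ.tendsto_convolution_dilation (W := fun _ => w) (fun _ _ => hw)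
    ((hw.tendsto y).comp tendsto_snd)
  have hsecond := hψ.tendsto_convolution_dilation
    (fun a ha => hψ.continuous_convolution_dilation hw.locallyIntegrable ha) hfirst
  have hpoint : Tendsto (fun a : ℝ => (a, y)) (𝓝[>] 0) (𝓝[>] 0 ×ˢ 𝓝 y) :=
    tendsto_id.prodMk (tendsto_const_nhds)
  simpa [secondOrderMollification] using
    (hfirst.comp hpoint).add ((hfirst.comp hpoint).sub (hsecond.comp hpoint))

end IsMollifier

namespace IsMollification

variable {μ} {ψ : E → ℝ} {u : ℝ → E → ℝ} {s a b : ℝ}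

theorem secondOrderMollification_eq (hu : IsMollification μ ψ u) (hψ : IsMollifier μ ψ)
    (hs : 0 < s) (ha : 0 < a) :
    secondOrderMollification μ ψ (u s) a =
      u a ⋆ dilation ψ s + u a ⋆ mollificationDefect μ ψ s a := by
  rw [hψ.convolution_mollificationDefect (hu.continuous ha).locallyIntegrable hs ha,
    secondOrderMollification, hu.convolution_comm hs ha]

theorem secondOrderMollification_sub (hu : IsMollification μ ψ u) (hψ : IsMollifier μ ψ)
    (hs : 0 < s) (ha : 0 < a) (hb : 0 < b) :
    secondOrderMollification μ ψ (u s) a - secondOrderMollification μ ψ (u s) b =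
      (u a ⋆ mollificationDefect μ ψ s a + u a ⋆ mollificationDefect μ ψ s b) -
        (u b ⋆ mollificationDefect μ ψ s a + u b ⋆ mollificationDefect μ ψ s b) := by
  have hswap : (u s ⋆ dilation ψ a) ⋆ dilation ψ b = (u s ⋆ dilation ψ b) ⋆ dilation ψ a :=
    (hψ.isMollification_convolution (hu.continuous hs).locallyIntegrable).convolution_comm ha hb
  have hua := (hu.continuous ha).locallyIntegrable (μ := μ)
  have hub := (hu.continuous hb).locallyIntegrable (μ := μ)
  rw [hψ.convolution_mollificationDefect hua hs ha, hψ.convolution_mollificationDefect hua hs hb,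
    hψ.convolution_mollificationDefect hub hs ha, hψ.convolution_mollificationDefect hub hs hb,
    secondOrderMollification, secondOrderMollification, hu.convolution_comm ha hs,
    hu.convolution_comm hb hs, hswap]
  abel

end IsMollification

theorem enorm_le_mul_tsum_of_tendsto {F : Type*} [NormedAddCommGroup F] {P : ℕ → F} {c : F}
    {w : ℕ → ℝ≥0∞} {K : ℝ≥0∞} (hzero : ‖P 0‖ₑ ≤ K * w 0)
    (hstep : ∀ k, edist (P k) (P (k + 1)) ≤ K * (w k + 2 * w (k + 1)))
    (hlim : Tendsto P atTop (𝓝 c)) : ‖c‖ₑ ≤ 4 * K * ∑' k, w k := by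
  have hshift : ∑' k, w (k + 1) ≤ ∑' k, w k :=
    ENNReal.tsum_comp_le_tsum_of_injective (add_left_injective 1) w
  calc ‖c‖ₑ ≤ ‖P 0‖ₑ + edist (P 0) c := by
        rw [edist_comm, edist_eq_enorm_sub]
        simpa using enorm_add_le (P 0) (c - P 0)
    _ ≤ K * ∑' k, w k + ∑' k, K * (w k + 2 * w (k + 1)) :=
        add_le_add (hzero.trans (mul_le_mul_right (ENNReal.le_tsum 0) K))
          (edist_le_tsum_of_edist_le_of_tendsto₀ _ hstep hlim)
    _ = K * ∑' k, w k + K * (∑' k, w k + 2 * ∑' k, w (k + 1)) := by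
        rw [ENNReal.tsum_mul_left, ENNReal.tsum_add, ENNReal.tsum_mul_left]
    _ ≤ K * ∑' k, w k + K * (∑' k, w k + 2 * ∑' k, w k) := by gcongr
    _ = 4 * K * ∑' k, w k := by ring

namespace IsMollification

variable {μ} {ψ : E → ℝ}

theorem exists_enorm_secondOrderMollification_le (hψ : IsMollifier μ ψ) :
    ∃ K ≠ ⊤, ∀ {u : ℝ → E → ℝ}, IsMollification μ ψ u → ∀ {s a : ℝ}, 0 < a → a ≤ s → ∀ y,
      ‖secondOrderMollification μ ψ (u s) a y‖ₑ ≤ K * ⨍⁻ z in ball y (2 * s), ‖u a z‖ₑ ∂μ := by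
  obtain ⟨K₁, hK₁, hdilation⟩ := exists_enorm_convolution_dilation_le_laverage μ hψ.continuous
    hψ.support_subset
  obtain ⟨K₂, hK₂, hdefect⟩ := hψ.exists_enorm_convolution_mollificationDefect_le
  refine ⟨K₁ * ENNReal.ofReal 2 ^ finrank ℝ E + K₂, by finiteness,
    fun {u} hu {s a} ha has y => ?_⟩
  have hs : 0 < s := ha.trans_le has
  have hball := laverage_ball_le_of_subset μ hs
    (ball_subset_ball (x := y) (by linarith : s ≤ 2 * s)) fun z => ‖u a z‖ₑ
  rw [mul_div_cancel_right₀ _ hs.ne'] at hball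
  have hratio : ENNReal.ofReal (a / s) ≤ 1 := ofReal_le_one.2 ((div_le_one hs).2 has)
  rw [hu.secondOrderMollification_eq hψ hs ha, Pi.add_apply, add_mul, mul_assoc]
  exact (enorm_add_le _ _).trans (add_le_add
    ((hdilation (u a) y hs).trans (mul_le_mul_right hball K₁))
    ((hdefect (u a) y ha has).trans (mul_le_mul_left (mul_le_of_le_one_right' hratio) _)))

theorem exists_edist_secondOrderMollification_le (hψ : IsMollifier μ ψ) :
    ∃ K ≠ ⊤, ∀ {u : ℝ → E → ℝ}, IsMollification μ ψ u → ∀ {s a : ℝ}, 0 < a → 2 * a ≤ s → ∀ y,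
      edist (secondOrderMollification μ ψ (u s) a y)
          (secondOrderMollification μ ψ (u s) (a / 2) y) ≤
        K * ENNReal.ofReal (2 * a / s) * (⨍⁻ z in ball y (2 * s), ‖u a z‖ₑ ∂μ +
          ⨍⁻ z in ball y (2 * s), ‖u (a / 2) z‖ₑ ∂μ) := by
  obtain ⟨K, hK, hdefect⟩ := hψ.exists_enorm_convolution_mollificationDefect_le
  refine ⟨K, hK, fun {u} hu {s a} ha has y => ?_⟩
  have hs : 0 < s := by linarith
  have hcoarse (c : ℝ) := hdefect (u c) y ha (by linarith : a ≤ s)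
  have hfine (c : ℝ) := hdefect (u c) y (half_pos ha) (by linarith : a / 2 ≤ s)
  have hratio : ENNReal.ofReal (a / s) + ENNReal.ofReal (a / 2 / s) ≤
      ENNReal.ofReal (2 * a / s) := by
    rw [← ENNReal.ofReal_add (by positivity) (by positivity), ← add_div]
    exact ENNReal.ofReal_le_ofReal (div_le_div_of_nonneg_right (by linarith) hs.le)
  have hsub := congrFun (hu.secondOrderMollification_sub hψ hs ha (half_pos ha)) y
  simp only [Pi.sub_apply, Pi.add_apply] at hsub
  rw [edist_eq_enorm_sub, hsub]
  refine (enorm_sub_le.trans (add_le_add (enorm_add_le _ _) (enorm_add_le _ _))).trans ?_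
  refine (add_le_add (add_le_add (hcoarse a) (hfine a))
    (add_le_add (hcoarse (a / 2)) (hfine (a / 2)))).trans ?_
  rw [← add_mul, ← add_mul, ← mul_add, ← mul_add]
  exact mul_le_mul_left (mul_le_mul_right hratio K) _

theorem exists_enorm_le_tsum_laverage (hψ : IsMollifier μ ψ) :
    ∃ C ≠ ⊤, ∀ {u : ℝ → E → ℝ}, IsMollification μ ψ u → ∀ {s : ℝ}, 0 < s → ∀ y,
      ‖u s y‖ₑ ≤
        C * ∑' k : ℕ, 2⁻¹ ^ k * ⨍⁻ z in ball y (2 * s), ‖u (s / 2 ^ (k + 1)) z‖ₑ ∂μ := by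
  obtain ⟨K₁, hK₁, hfirst⟩ := exists_enorm_secondOrderMollification_le hψ
  obtain ⟨K₂, hK₂, hdiff⟩ := exists_edist_secondOrderMollification_le hψ
  refine ⟨4 * (K₁ + K₂), by finiteness, fun {u} hu {s} hs y => ?_⟩
  have hscale (k : ℕ) : 0 < s / 2 ^ (k + 1) := by positivity
  refine enorm_le_mul_tsum_of_tendsto
    (P := fun k : ℕ => secondOrderMollification μ ψ (u s) (s / 2 ^ (k + 1)) y)
    ?_ (fun k => ?_) ?_
  · rw [pow_zero, one_mul]
    exact (hfirst hu (hscale 0) (by linarith) y).trans (mul_le_mul_left le_self_add _)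
  · have hratio : ENNReal.ofReal (2 * (s / 2 ^ (k + 1)) / s) = 2⁻¹ ^ k := by
      rw [show 2 * (s / 2 ^ (k + 1)) / s = 2⁻¹ ^ k by rw [pow_succ, inv_pow]; field_simp,
        ENNReal.ofReal_pow (by positivity), ENNReal.ofReal_inv_of_pos two_pos, ofReal_ofNat]
    have hpow : (2 : ℝ≥0∞) * 2⁻¹ ^ (k + 1) = 2⁻¹ ^ k := by
      rw [pow_succ, mul_left_comm, ENNReal.mul_inv_cancel two_ne_zero ofNat_ne_top, mul_one]
    have hsmall : 2 * (s / 2 ^ (k + 1)) ≤ s := by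
      rw [pow_succ, mul_div_assoc', mul_comm, mul_div_mul_right _ _ two_ne_zero]
      exact div_le_self hs.le (one_le_pow₀ one_le_two)
    have hstep := hdiff hu (hscale k) hsmall y
    rw [div_div, ← pow_succ, hratio, mul_assoc] at hstep
    rw [← mul_assoc 2, hpow, ← mul_add]
    exact hstep.trans (mul_le_mul_left le_add_self _)
  · exact (hψ.tendsto_secondOrderMollification (hu.continuous hs) y).comp
      ((tendsto_div_two_pow_nhdsGT_zero hs).comp (tendsto_add_atTop_nat 1))

end IsMollification

/-! ### Lowering the exponent in the sub-mean value property -/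

theorem le_rpow_mul_rpow_one_sub {a b c : ℝ≥0∞} {r : ℝ} (hr : 0 ≤ r) (hr1 : r ≤ 1) (hab : a ≤ b)
    (hac : a ≤ c) : a ≤ b ^ r * c ^ (1 - r) :=
  calc a = a ^ r * a ^ (1 - r) := by
        rw [← ENNReal.rpow_add_of_nonneg _ _ hr (sub_nonneg.2 hr1), add_sub_cancel,
          ENNReal.rpow_one]
    _ ≤ b ^ r * c ^ (1 - r) := mul_le_mul' (ENNReal.rpow_le_rpow hab hr)
        (ENNReal.rpow_le_rpow hac (sub_nonneg.2 hr1))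

theorem le_mul_rpow_of_self_improving {ι : Type*} {G V : ι → ℝ≥0∞} (hV0 : ∀ i, V i ≠ 0)
    (hV : ∀ i, V i ≠ ⊤) {r : ℝ} (hr : 0 < r) {B D : ℝ≥0∞} (hB : B ≠ ⊤)
    (hbound : ∀ i, G i ≤ V i * B)
    (himprove : ∀ A, (∀ i, G i ≤ V i * A) → ∀ i, G i ≤ V i * (D * A ^ (1 - r))) (i : ι) :
    G i ≤ V i * D ^ (1 / r) := by
  set A := ⨆ i, (V i)⁻¹ * G i
  have hA_le {A' : ℝ≥0∞} : A ≤ A' ↔ ∀ i, G i ≤ V i * A' := by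
    simp only [A, iSup_le_iff, ENNReal.inv_mul_le_iff (hV0 _) (hV _)]
  have hG : ∀ i, G i ≤ V i * A := hA_le.1 le_rfl
  have hA : A ^ r ≤ D := rpow_le_of_le_mul_rpow_one_sub hr
    (ne_top_of_le_ne_top hB (hA_le.2 hbound)) (hA_le.2 (himprove A hG))
  refine (hG i).trans (mul_le_mul_right ?_ _)
  rwa [one_div, ENNReal.le_rpow_inv_iff hr]

theorem two_inv_mul_two_pow_succ_rpow_lt_one {d : ℕ} {r : ℝ} (hr : (d : ℝ) / (d + 1) < r) :
    (2⁻¹ : ℝ≥0∞) * (2 ^ (d + 1)) ^ (1 - r) < 1 := by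
  rw [div_lt_iff₀ (by positivity)] at hr
  have hexp : ((d + 1 : ℕ) : ℝ) * (1 - r) < 1 := by
    push_cast
    linarith
  rw [← ENNReal.rpow_natCast, ← ENNReal.rpow_mul]
  calc (2⁻¹ : ℝ≥0∞) * 2 ^ (((d + 1 : ℕ) : ℝ) * (1 - r)) < 2⁻¹ * 2 ^ (1 : ℝ) := by
        refine ENNReal.mul_lt_mul_right (ENNReal.inv_ne_zero.2 ofNat_ne_top) (by simp) ?_
        exact ENNReal.rpow_lt_rpow_of_exponent_lt one_lt_two ofNat_ne_top hexp
    _ = 1 := by rw [ENNReal.rpow_one, ENNReal.inv_mul_cancel two_ne_zero ofNat_ne_top]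

theorem ball_two_mul_subset_closedBall_of_mem {X : Type*} [PseudoMetricSpace X] {x₀ y : X} {t : ℝ}
    (ht : 0 < t) {k : ℕ} (hy : y ∈ closedBall x₀ (6 * t - 4 * (t / 2 ^ k))) (m : ℕ) :
    ball y (2 * (t / 2 ^ k)) ⊆ closedBall x₀ (6 * t - 4 * (t / 2 ^ (k + m + 1))) := by
  refine ball_subset_closedBall.trans (closedBall_subset_closedBall' ?_)
  have hhalf : t / 2 ^ (k + m + 1) ≤ t / 2 ^ k / 2 := by
    rw [div_div, ← pow_succ]
    exact div_le_div_of_nonneg_left ht.le (by positivity)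
      (pow_le_pow_right₀ one_le_two (by omega))
  linarith [mem_closedBall.1 hy]

theorem laverage_ball_le_of_le_pow_mul {r : ℝ} (hr : 0 ≤ r) (hr1 : r ≤ 1)
    {G : ℕ → E → ℝ≥0∞} {M : E → ℝ≥0∞} (hM : Measurable M) (hGM : ∀ k y, G k y ≤ M y)
    {x₀ : E} {t : ℝ} (ht : 0 < t) {V A : ℝ≥0∞}
    (hA : ∀ k, ∀ y ∈ closedBall x₀ (6 * t - 4 * (t / 2 ^ k)), G k y ≤ V ^ k * A)
    {k : ℕ} {y : E} (hy : y ∈ closedBall x₀ (6 * t - 4 * (t / 2 ^ k))) (m : ℕ) :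
    ⨍⁻ z in ball y (2 * (t / 2 ^ k)), G (k + m + 1) z ∂μ ≤
      (V ^ (1 - r)) ^ (k + m + 1) * A ^ (1 - r) *
        ((3 * 2 ^ k) ^ finrank ℝ E * ⨍⁻ z in ball x₀ (6 * t), M z ^ r ∂μ) := by
  set l := k + m + 1
  have hsub := ball_two_mul_subset_closedBall_of_mem ht hy m
  have hbig : ball y (2 * (t / 2 ^ k)) ⊆ ball x₀ (6 * t) :=
    hsub.trans (closedBall_subset_ball (sub_lt_self _ (by positivity)))
  have hconst : (V ^ l * A) ^ (1 - r) = (V ^ (1 - r)) ^ l * A ^ (1 - r) := by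
    rw [ENNReal.mul_rpow_of_nonneg _ _ (sub_nonneg.2 hr1), ← ENNReal.rpow_natCast,
      ← ENNReal.rpow_natCast, ← ENNReal.rpow_mul, ← ENNReal.rpow_mul, mul_comm (l : ℝ)]
  have hratio : ENNReal.ofReal (6 * t / (2 * (t / 2 ^ k))) = 3 * 2 ^ k := by
    rw [show 6 * t / (2 * (t / 2 ^ k)) = 3 * 2 ^ k by field_simp; norm_num,
      ENNReal.ofReal_mul zero_le_three, ENNReal.ofReal_pow zero_le_two, ofReal_ofNat, ofReal_ofNat]
  calc ⨍⁻ z in ball y (2 * (t / 2 ^ k)), G l z ∂μ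
      ≤ ⨍⁻ z in ball y (2 * (t / 2 ^ k)), (V ^ l * A) ^ (1 - r) * M z ^ r ∂μ := by
        refine laverage_mono_ae (ae_restrict_of_forall_mem measurableSet_ball fun z hz => ?_)
        exact (le_rpow_mul_rpow_one_sub hr hr1 (hGM l z) (hA l z (hsub hz))).trans_eq
          (mul_comm _ _)
    _ = (V ^ l * A) ^ (1 - r) * ⨍⁻ z in ball y (2 * (t / 2 ^ k)), M z ^ r ∂μ :=
        laverage_const_mul _ (hM.pow_const r).aemeasurable
    _ ≤ _ := by
        rw [hconst, ← hratio]
        exact mul_le_mul_right (laverage_ball_le_of_subset μ (by positivity) hbig _) _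

-- The radii `6t - 4t/2ᵏ` increase with `k`, so the averages over `ball y (2t/2ᵏ)` stay inside the
-- region where `G (k + m + 1)` is controlled.
theorem le_pow_mul_rpow_one_sub_of_le_tsum_laverage {r : ℝ}
    (hr : (finrank ℝ E : ℝ) / (finrank ℝ E + 1) < r) (hr1 : r ≤ 1) {C₀ : ℝ≥0∞}
    {G : ℕ → E → ℝ≥0∞} {M : E → ℝ≥0∞} (hM : Measurable M) (hGM : ∀ k y, G k y ≤ M y)
    {x₀ : E} {t : ℝ} (ht : 0 < t)
    (hmean : ∀ k y, G k y ≤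
      C₀ * ∑' m, 2⁻¹ ^ m * ⨍⁻ z in ball y (2 * (t / 2 ^ k)), G (k + m + 1) z ∂μ)
    {A : ℝ≥0∞}
    (hA : ∀ k, ∀ y ∈ closedBall x₀ (6 * t - 4 * (t / 2 ^ k)),
      G k y ≤ (2 ^ (finrank ℝ E + 1)) ^ k * A)
    {k : ℕ} {y : E} (hy : y ∈ closedBall x₀ (6 * t - 4 * (t / 2 ^ k))) :
    G k y ≤ (2 ^ (finrank ℝ E + 1)) ^ k *
      (C₀ * 3 ^ finrank ℝ E * (2 ^ (finrank ℝ E + 1)) ^ (1 - r) *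
        (1 - 2⁻¹ * (2 ^ (finrank ℝ E + 1)) ^ (1 - r))⁻¹ *
        (⨍⁻ z in ball x₀ (6 * t), M z ^ r ∂μ) * A ^ (1 - r)) := by
  have hr0 : 0 ≤ r := (show (0 : ℝ) ≤ _ by positivity).trans hr.le
  have hρ := two_inv_mul_two_pow_succ_rpow_lt_one hr
  set d := finrank ℝ E
  set b : ℝ≥0∞ := (2 ^ (d + 1)) ^ (1 - r)
  set I := ⨍⁻ z in ball x₀ (6 * t), M z ^ r ∂μ
  have hb : b ≤ 2 := by
    simpa using (ENNReal.inv_mul_le_iff two_ne_zero ofNat_ne_top).1 hρ.le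
  calc G k y
      ≤ C₀ * ∑' m : ℕ, 2⁻¹ ^ m * (b ^ (k + m + 1) * A ^ (1 - r) * ((3 * 2 ^ k) ^ d * I)) :=
        (hmean k y).trans (mul_le_mul_right (ENNReal.tsum_le_tsum fun m => mul_le_mul_right
          (laverage_ball_le_of_le_pow_mul μ hr0 hr1 hM hGM ht hA hy m) _) _)
    _ = C₀ * ∑' m : ℕ, (2⁻¹ * b) ^ m * (b ^ (k + 1) * A ^ (1 - r) * ((3 * 2 ^ k) ^ d * I)) := by
        refine congrArg (C₀ * ·) (tsum_congr fun m => ?_)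
        rw [mul_pow 2⁻¹ b]
        ring
    _ = (2 ^ d * b) ^ k * (C₀ * 3 ^ d * b * (1 - 2⁻¹ * b)⁻¹ * I * A ^ (1 - r)) := by
        rw [ENNReal.tsum_mul_right, ENNReal.tsum_geometric]
        ring
    _ ≤ (2 ^ (d + 1)) ^ k * (C₀ * 3 ^ d * b * (1 - 2⁻¹ * b)⁻¹ * I * A ^ (1 - r)) := by
        rw [pow_succ]
        exact mul_le_mul_left (pow_le_pow_left' (mul_le_mul_right hb _) k) _

theorem exists_le_powerMean_of_le_tsum_laverage {r : ℝ}
    (hr : (finrank ℝ E : ℝ) / (finrank ℝ E + 1) < r) (hr1 : r ≤ 1) {C₀ : ℝ≥0∞} (hC₀ : C₀ ≠ ⊤) :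
    ∃ C ≠ ⊤, ∀ {G : ℕ → E → ℝ≥0∞} {M : E → ℝ≥0∞}, Measurable M → (∀ k y, G k y ≤ M y) →
      ∀ {x₀ : E} {t : ℝ}, 0 < t →
      (∀ k y, G k y ≤
        C₀ * ∑' m, 2⁻¹ ^ m * ⨍⁻ z in ball y (2 * (t / 2 ^ k)), G (k + m + 1) z ∂μ) →
      (∃ B ≠ ⊤, ∀ k, ∀ y ∈ ball x₀ (6 * t), G k y ≤ (2 ^ (finrank ℝ E + 1)) ^ k * B) →
      ∀ y ∈ closedBall x₀ (2 * t), G 0 y ≤ C * powerMean μ r M x₀ (6 * t) := by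
  have hr0 : 0 < r := (show (0 : ℝ) ≤ _ by positivity).trans_lt hr
  set d := finrank ℝ E
  set b : ℝ≥0∞ := (2 ^ (d + 1)) ^ (1 - r)
  have hb : b ≠ ⊤ := ENNReal.rpow_ne_top_of_nonneg (sub_nonneg.2 hr1) (by finiteness)
  have hgeom : (1 - 2⁻¹ * b)⁻¹ ≠ ⊤ :=
    ENNReal.inv_ne_top.2 (tsub_pos_of_lt (two_inv_mul_two_pow_succ_rpow_lt_one hr)).ne'
  refine ⟨(C₀ * 3 ^ d * b * (1 - 2⁻¹ * b)⁻¹) ^ (1 / r),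
    ENNReal.rpow_ne_top_of_nonneg (by positivity) (by finiteness), ?_⟩
  rintro G M hM hGM x₀ t ht hmean ⟨B, hB, hgrowth⟩ y hy
  rw [powerMean, ← ENNReal.mul_rpow_of_nonneg _ _ (by positivity)]
  have hself := le_mul_rpow_of_self_improving
    (ι := {q : ℕ × E // q.2 ∈ closedBall x₀ (6 * t - 4 * (t / 2 ^ q.1))})
    (G := fun q => G q.1.1 q.1.2) (V := fun q => (2 ^ (d + 1)) ^ q.1.1) (fun _ => by positivity)
    (fun _ => by finiteness) hr0 hB
    (fun q => hgrowth _ _ (closedBall_subset_ball (sub_lt_self _ (by positivity)) q.2))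
    (fun A hA q => le_pow_mul_rpow_one_sub_of_le_tsum_laverage μ hr hr1 hM hGM ht hmean
      (fun k z hz => hA ⟨(k, z), hz⟩) q.2)
    ⟨(0, y), closedBall_subset_closedBall (by linarith) hy⟩
  simpa using hself

/-! ### Pointwise bounds for the mollifications of a function -/

/-- The candidate Hajłasz gradient of `f`, up to a constant factor: the sum over a basis of the
`r`-maximal functions of the maximal functions of the derivatives of `f`. -/
def gradientMaximalFunction {ι : Type*} [Fintype ι] (b : Basis ι ℝ E) (r : ℝ) (ψ f : E → ℝ)
    (x : E) : ℝ≥0∞ :=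
  ∑ i, powerMaximalFunction μ r (derivMaximalFunction μ ψ f (b i)) x

namespace IsMollifier

variable {μ} {ψ f : E → ℝ}

theorem exists_enorm_mollifiedDeriv_le_pow_mul (hψ : IsMollifier μ ψ)
    (hf : LocallyIntegrable f μ) (v x : E) {t : ℝ} (ht : 0 < t) :
    ∃ B ≠ ⊤, ∀ k : ℕ, ∀ y ∈ ball x (6 * t),
      ‖mollifiedDeriv μ ψ f v (t / 2 ^ k) y‖ₑ ≤ (2 ^ (finrank ℝ E + 1)) ^ k * B := by
  obtain ⟨K, hK, hkernel⟩ := hψ.exists_enorm_mollifiedDeriv_le_laverage v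
  set A : ℝ≥0∞ := ⨍⁻ y in ball x (7 * t), ‖f y‖ₑ ∂μ
  have hA : A ≠ ⊤ := by
    have hinteg : IntegrableOn f (ball x (7 * t)) μ :=
      (hf.integrableOn_isCompact (isCompact_closedBall x (7 * t))).mono_set ball_subset_closedBall
    rw [show A = _ from setLAverage_eq μ _ _]
    exact ENNReal.div_ne_top hinteg.2.ne (measure_ball_pos μ x (by positivity)).ne'
  have htinv : (ENNReal.ofReal t)⁻¹ ≠ ⊤ := by simpa using ht
  refine ⟨(ENNReal.ofReal t)⁻¹ * (K * (7 ^ finrank ℝ E * A)), by finiteness, fun k y hy => ?_⟩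
  have htk : 0 < t / 2 ^ k := by positivity
  have hsub : ball y (t / 2 ^ k) ⊆ ball x (7 * t) := by
    refine ball_subset_ball' ?_
    linarith [mem_ball.1 hy, div_le_self ht.le (one_le_pow₀ (n := k) (one_le_two (α := ℝ)))]
  calc ‖mollifiedDeriv μ ψ f v (t / 2 ^ k) y‖ₑ
      ≤ (ENNReal.ofReal (t / 2 ^ k))⁻¹ *
          (K * (ENNReal.ofReal (7 * t / (t / 2 ^ k)) ^ finrank ℝ E * A)) :=
        (hkernel f y htk).trans (by gcongr; exact laverage_ball_le_of_subset μ htk hsub _)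
    _ = (2 ^ k * (ENNReal.ofReal t)⁻¹) * (K * ((7 * 2 ^ k) ^ finrank ℝ E * A)) := by
        rw [show 7 * t / (t / 2 ^ k) = 7 * 2 ^ k by field_simp,
          ENNReal.ofReal_div_of_pos (by positivity), ENNReal.ofReal_mul (by positivity),
          ENNReal.ofReal_pow zero_le_two, ofReal_ofNat, ofReal_ofNat,
          ENNReal.inv_div (.inl (by finiteness)) (.inl (by positivity)), div_eq_mul_inv]
    _ = _ := by ring

theorem exists_enorm_mollifiedDeriv_le_powerMaximalFunction (hψ : IsMollifier μ ψ) {r : ℝ}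
    (hr : (finrank ℝ E : ℝ) / (finrank ℝ E + 1) < r) (hr1 : r ≤ 1) :
    ∃ C ≠ ⊤, ∀ {f : E → ℝ}, LocallyIntegrable f μ → ∀ (v x : E) {t : ℝ}, 0 < t →
      ∀ y ∈ closedBall x (2 * t), ‖mollifiedDeriv μ ψ f v t y‖ₑ ≤
        C * powerMaximalFunction μ r (derivMaximalFunction μ ψ f v) x := by
  have hr0 : 0 < r := lt_of_le_of_lt (by positivity) hr
  obtain ⟨C₀, hC₀, hsubmean⟩ := IsMollification.exists_enorm_le_tsum_laverage hψ
  obtain ⟨C, hC, hpower⟩ := exists_le_powerMean_of_le_tsum_laverage μ hr hr1 hC₀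
  refine ⟨C, hC, fun {f} hf v x {t} ht y hy => ?_⟩
  have hmean := hpower (G := fun k z => ‖mollifiedDeriv μ ψ f v (t / 2 ^ k) z‖ₑ)
    (hψ.measurable_derivMaximalFunction hf v)
    (fun k z => enorm_mollifiedDeriv_le_derivMaximalFunction μ ψ f v z (by positivity)) ht
    (fun k z => ?_) (hψ.exists_enorm_mollifiedDeriv_le_pow_mul hf v x ht) y hy
  · rw [pow_zero, div_one] at hmean
    exact hmean.trans (mul_le_mul_right
      (powerMean_le_powerMaximalFunction μ hr0 _ (mem_ball_self (by positivity))) C)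
  · have hk := hsubmean (hψ.isMollification_mollifiedDeriv hf v) (s := t / 2 ^ k)
      (by positivity) z
    simpa only [div_div, ← pow_add, ← add_assoc] using hk

theorem exists_lipschitzOnWith_convolution_dilation (hψ : IsMollifier μ ψ) {r : ℝ}
    (hr : (finrank ℝ E : ℝ) / (finrank ℝ E + 1) < r) (hr1 : r ≤ 1) {ι : Type*} [Fintype ι]
    (b : Basis ι ℝ E) :
    ∃ C : ℝ≥0, ∀ {f : E → ℝ}, LocallyIntegrable f μ →
      ∀ x, gradientMaximalFunction μ b r ψ f x ≠ ⊤ → ∀ {s : ℝ}, 0 < s →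
        LipschitzOnWith (C * (gradientMaximalFunction μ b r ψ f x).toNNReal) (f ⋆ dilation ψ s)
          (closedBall x (2 * s)) := by
  obtain ⟨C, hC, hderiv⟩ := hψ.exists_enorm_mollifiedDeriv_le_powerMaximalFunction hr hr1
  obtain ⟨K, -, hopNorm⟩ := b.exists_opNNNorm_le (F := ℝ)
  refine ⟨K * C.toNNReal, fun {f} hf x hx {s} hs => ?_⟩
  choose D hD hDv using hasFDerivAt_convolution_mul μ hf (contDiff_dilation hψ.contDiff s)
    (hψ.hasCompactSupport_dilation hs)
  refine (convex_closedBall x (2 * s)).lipschitzOnWith_of_nnnorm_hasFDerivWithin_le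
    (fun y _ => (hD y).hasFDerivWithinAt) fun y hy => ?_
  rw [mul_assoc]
  refine hopNorm _ fun i => ?_
  rw [hDv, ← ENNReal.coe_le_coe, ENNReal.coe_mul, ENNReal.coe_toNNReal hC,
    ENNReal.coe_toNNReal hx]
  exact (hderiv hf (b i) x hs y hy).trans (mul_le_mul_right
    (Finset.single_le_sum (f := fun i => powerMaximalFunction μ r _ x) (fun _ _ => zero_le)
      (Finset.mem_univ i)) C)

theorem ae_tendsto_convolution_dilation (hψ : IsMollifier μ ψ) (hf : LocallyIntegrable f μ) :
    ∀ᵐ x ∂μ, Tendsto (fun s => (f ⋆ dilation ψ s) x) (𝓝[>] 0) (𝓝 (f x)) := by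
  obtain ⟨K, hK⟩ := (hasCompactSupport_of_support_subset_ball
    hψ.support_subset).exists_bound_of_continuous hψ.continuous
  have hpos : ∀ᶠ s : ℝ in 𝓝[>] 0, 0 < s := self_mem_nhdsWithin
  filter_upwards [IsUnifLocDoublingMeasure.ae_tendsto_average_norm_sub μ hf 1] with x hx
  have haverage := hx (fun _ => x) id tendsto_id
    (hpos.mono fun s hs => mem_closedBall_self (by simpa using hs.le))
  have hlim := tendsto_integral_smul_of_tendsto_average_norm_sub
    (g := fun s y => dilation ψ s (x - y)) (K * μ.real (ball (0 : E) 1)) haverage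
    (.of_forall fun s => hf.integrableOn_isCompact (isCompact_closedBall x s))
    (tendsto_const_nhds.congr' <| hpos.mono fun s hs => by
      beta_reduce
      rw [integral_sub_left_eq_self (dilation ψ s), hψ.integral_dilation_eq_one hs])
    (hpos.mono fun s hs y hy => by
      have hxy := hψ.support_dilation_subset hs hy
      rw [mem_ball_zero_iff, ← dist_eq_norm] at hxy
      exact mem_closedBall'.2 hxy.le)
    (hpos.mono fun s hs y => by
      have : μ.real (ball (0 : E) 1) ≠ 0 :=
        (ENNReal.toReal_pos (measure_ball_pos μ _ one_pos).ne' measure_ball_lt_top.ne).ne'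
      rw [id, Measure.addHaar_real_closedBall _ _ hs.le, mul_div_mul_right _ _ this,
        ← Real.norm_eq_abs, dilation, norm_mul, norm_pow, norm_inv, Real.norm_of_nonneg hs.le,
        inv_pow, inv_mul_eq_div]
      gcongr
      exact hK _)
  refine hlim.congr fun s => ?_
  simp only [convolution_mul, smul_eq_mul, mul_comm]

end IsMollifier

namespace IsMollification

variable {μ} {ψ : E → ℝ} {u : ℝ → E → ℝ}

theorem dist_half_le (hψ : IsMollifier μ ψ)
    (hu : IsMollification μ ψ u) {L : ℝ≥0} {x : E}
    (hLip : ∀ {s : ℝ}, 0 < s → LipschitzOnWith L (u s) (closedBall x (2 * s))) {s : ℝ}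
    (hs : 0 < s) : dist (u s x) (u (s / 2) x) ≤ 2 * (∫ z, ‖ψ z‖ ∂μ) * L * s := by
  have hmollify {a c : ℝ} (ha : 0 < a) (hc : 0 < c) (has : a ≤ s) (hac : a ≤ 2 * c) :
      dist ((u c ⋆ dilation ψ a) x) (u c x) ≤ (∫ z, ‖ψ z‖ ∂μ) * (L * s) := by
    refine hψ.dist_convolution_dilation_le ha (hu.continuous hc) (by positivity) fun z hz => ?_
    have hz' : dist z x < a := hz
    calc dist (u c z) (u c x) ≤ L * dist z x :=
          (hLip hc).dist_le_mul z (by rw [mem_closedBall]; linarith) x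
            (mem_closedBall_self (by positivity))
      _ ≤ L * s := by gcongr; linarith
  have hs2 : 0 < s / 2 := by positivity
  have hfine := hmollify hs2 hs (by linarith) (by linarith)
  have hcoarse := hmollify hs hs2 le_rfl (by linarith)
  rw [hu.convolution_comm hs hs2] at hfine
  linarith [dist_triangle_left (u s x) (u (s / 2) x) ((u (s / 2) ⋆ dilation ψ s) x)]

theorem dist_le_of_tendsto (hψ : IsMollifier μ ψ)
    (hu : IsMollification μ ψ u) {L : ℝ≥0} {x : E}
    (hLip : ∀ {s : ℝ}, 0 < s → LipschitzOnWith L (u s) (closedBall x (2 * s))) {c : ℝ}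
    (hlim : Tendsto (fun s => u s x) (𝓝[>] 0) (𝓝 c)) {s : ℝ} (hs : 0 < s) :
    dist (u s x) c ≤ 4 * (∫ z, ‖ψ z‖ ∂μ) * L * s := by
  have hstep (k : ℕ) : dist (u (s / 2 ^ k) x) (u (s / 2 ^ (k + 1)) x) ≤
      4 * (∫ z, ‖ψ z‖ ∂μ) * L * s / 2 / 2 ^ k := by
    rw [pow_succ, ← div_div]
    exact (hu.dist_half_le hψ hLip (by positivity)).trans_eq (by ring)
  simpa using dist_le_of_le_geometric_two_of_tendsto₀ hstep
    (hlim.comp (tendsto_div_two_pow_nhdsGT_zero hs))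

theorem dist_le_of_tendsto_of_tendsto
    (hψ : IsMollifier μ ψ) (hu : IsMollification μ ψ u) {L M : ℝ≥0} {x y : E}
    (hLip : ∀ {s : ℝ}, 0 < s → LipschitzOnWith L (u s) (closedBall x (2 * s)))
    (hLip' : ∀ {s : ℝ}, 0 < s → LipschitzOnWith M (u s) (closedBall y (2 * s))) {c c' : ℝ}
    (hlim : Tendsto (fun s => u s x) (𝓝[>] 0) (𝓝 c))
    (hlim' : Tendsto (fun s => u s y) (𝓝[>] 0) (𝓝 c')) (hxy : x ≠ y) :
    dist c c' ≤ dist x y * ((4 * (∫ z, ‖ψ z‖ ∂μ) + 1) * (L + M)) := by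
  have hs : 0 < dist x y := dist_pos.2 hxy
  have hmid : dist (u (dist x y) x) (u (dist x y) y) ≤ L * dist x y :=
    (hLip hs).dist_le_mul x (mem_closedBall_self (by positivity)) y
      (by rw [mem_closedBall']; linarith)
  have : 0 ≤ M * dist x y := by positivity
  calc dist c c' ≤ dist c (u (dist x y) x) + dist (u (dist x y) x) (u (dist x y) y) +
        dist (u (dist x y) y) c' := dist_triangle4 _ _ _ _
    _ ≤ 4 * (∫ z, ‖ψ z‖ ∂μ) * L * dist x y + L * dist x y +
        4 * (∫ z, ‖ψ z‖ ∂μ) * M * dist x y := by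
      rw [dist_comm c]
      exact add_le_add_three (hu.dist_le_of_tendsto hψ hLip hlim hs) hmid
        (hu.dist_le_of_tendsto hψ hLip' hlim' hs)
    _ ≤ _ := by linarith

end IsMollification

theorem IsMollifier.exists_hasHajlaszGradient {μ : Measure E} [μ.IsAddHaarMeasure]
    {ψ : E → ℝ} (hψ : IsMollifier μ ψ) {r : ℝ}
    (hr : (finrank ℝ E : ℝ) / (finrank ℝ E + 1) < r) (hr1 : r ≤ 1) {ι : Type*} [Fintype ι]
    (b : Basis ι ℝ E) :
    ∃ C : ℝ≥0, ∀ {f : E → ℝ}, LocallyIntegrable f μ →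
      (∀ᵐ x ∂μ, gradientMaximalFunction μ b r ψ f x ≠ ⊤) →
        HasHajlaszGradient μ f fun x => C * (gradientMaximalFunction μ b r ψ f x).toNNReal := by
  obtain ⟨C, hLip⟩ := hψ.exists_lipschitzOnWith_convolution_dilation hr hr1 b
  set I : ℝ≥0 := ⟨∫ z, ‖ψ z‖ ∂μ, integral_nonneg fun _ => norm_nonneg _⟩
  refine ⟨(4 * I + 1) * C, fun {f} hf hfin => ?_⟩
  have hgood := hfin.and (hψ.ae_tendsto_convolution_dilation hf)
  refine ⟨_, ae_iff.1 hgood, fun x hx y hy => ?_⟩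
  obtain ⟨hx, hlim⟩ := not_not.1 hx
  obtain ⟨hy, hlim'⟩ := not_not.1 hy
  rcases eq_or_ne x y with rfl | hxy
  · simp
  have hdist := (hψ.isMollification_convolution hf).dist_le_of_tendsto_of_tendsto hψ
    (hLip hf x hx) (hLip hf y hy) hlim hlim' hxy
  simp only [edist_nndist, ← ENNReal.coe_add, ← ENNReal.coe_mul, ENNReal.coe_le_coe]
  rw [mul_assoc, mul_assoc, ← mul_add]
  exact hdist

/-! ### Bounds in `L^p` -/

theorem exists_exponent_le_one_of_div_add_one_lt {d : ℕ} {p : ℝ} (hp : (d : ℝ) / (d + 1) < p) :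
    ∃ r, (d : ℝ) / (d + 1) < r ∧ 0 < r ∧ r ≤ 1 ∧ r < p := by
  have hlt : (d : ℝ) / (d + 1) < 1 := (div_lt_one (by positivity)).2 (lt_add_one _)
  obtain ⟨r, hr, hrp⟩ := exists_between (lt_min hp hlt)
  exact ⟨r, hr, lt_of_le_of_lt (by positivity) hr, (hrp.trans_le (min_le_right _ _)).le,
    hrp.trans_le (min_le_left _ _)⟩

namespace IsMollifier

variable {μ} [Nontrivial E] {ψ : E → ℝ} {p : ℝ}

theorem exists_lintegral_derivMaximalFunction_rpow_le (hψ : IsMollifier μ ψ)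
    (hp : (finrank ℝ E : ℝ) / (finrank ℝ E + 1) < p) (v : E) :
    ∃ C ≠ ⊤, ∀ {f : E → ℝ} {g : E → ℝ≥0}, LocallyIntegrable f μ → Measurable g →
      HasHajlaszGradient μ f g →
        ∫⁻ x, derivMaximalFunction μ ψ f v x ^ p ∂μ ≤ C * ∫⁻ x, (g x : ℝ≥0∞) ^ p ∂μ := by
  obtain ⟨r, hr, hr0, hr1, hrp⟩ := exists_exponent_le_one_of_div_add_one_lt hp
  have hp0 : 0 ≤ p := (hr0.trans hrp).le
  obtain ⟨C₁, hC₁, hpointwise⟩ :=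
    hψ.exists_derivMaximalFunction_le_powerMaximalFunction hr hr1 v
  obtain ⟨C₂, hC₂, hmaximal⟩ := exists_lintegral_powerMaximalFunction_rpow_le μ hr0 hrp
  refine ⟨C₁ ^ p * C₂, by finiteness, fun {f g} hf hg hfg => ?_⟩
  calc ∫⁻ x, derivMaximalFunction μ ψ f v x ^ p ∂μ
      ≤ ∫⁻ x, C₁ ^ p * powerMaximalFunction μ r (fun y => g y) x ^ p ∂μ :=
        lintegral_mono fun x => by
          rw [← ENNReal.mul_rpow_of_nonneg _ _ hp0]
          exact ENNReal.rpow_le_rpow (hpointwise hf hg hfg x) hp0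
    _ = C₁ ^ p * ∫⁻ x, powerMaximalFunction μ r (fun y => g y) x ^ p ∂μ :=
        lintegral_const_mul' _ _ (by finiteness)
    _ ≤ C₁ ^ p * C₂ * ∫⁻ x, (g x : ℝ≥0∞) ^ p ∂μ := by
        rw [mul_assoc]
        exact mul_le_mul_right (hmaximal _ hg.coe_nnreal_ennreal) _

variable {ι : Type*} [Fintype ι]

theorem exists_lintegral_gradientMaximalFunction_rpow_le (hψ : IsMollifier μ ψ) {r : ℝ}
    (hr : 0 < r) (hrp : r < p) (b : Basis ι ℝ E) :
    ∃ C ≠ ⊤, ∀ {f : E → ℝ}, LocallyIntegrable f μ →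
      ∫⁻ x, gradientMaximalFunction μ b r ψ f x ^ p ∂μ ≤
        C * ∑ i, ∫⁻ x, derivMaximalFunction μ ψ f (b i) x ^ p ∂μ := by
  have hp : 0 < p := hr.trans hrp
  obtain ⟨C, hC, hmaximal⟩ := exists_lintegral_powerMaximalFunction_rpow_le μ hr hrp
  set N : ℝ≥0∞ := ((Finset.univ : Finset ι).card : ℝ≥0∞) ^ p
  have hN : N ≠ ⊤ := ENNReal.rpow_ne_top_of_nonneg hp.le (ENNReal.natCast_ne_top _)
  refine ⟨N * C, by finiteness, fun {f} hf => ?_⟩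
  set W : ι → E → ℝ≥0∞ := fun i => powerMaximalFunction μ r (derivMaximalFunction μ ψ f (b i))
  calc ∫⁻ x, (∑ i, W i x) ^ p ∂μ
      ≤ ∫⁻ x, N * ∑ i, W i x ^ p ∂μ :=
        lintegral_mono fun x => sum_rpow_le_card_rpow_mul_sum_rpow _ _ hp
    _ = N * ∑ i, ∫⁻ x, W i x ^ p ∂μ := by
        rw [lintegral_const_mul' _ _ hN, lintegral_finsetSum _ fun i _ =>
          (measurable_powerMaximalFunction μ r _).pow_const p]
    _ ≤ N * ∑ i, C * ∫⁻ x, derivMaximalFunction μ ψ f (b i) x ^ p ∂μ :=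
        mul_le_mul_right (Finset.sum_le_sum fun i _ =>
          hmaximal _ (hψ.measurable_derivMaximalFunction hf (b i))) N
    _ = _ := by rw [← Finset.mul_sum, mul_assoc]

theorem exists_hasHajlaszGradient_lintegral_rpow_le (hψ : IsMollifier μ ψ)
    (hp : (finrank ℝ E : ℝ) / (finrank ℝ E + 1) < p) (b : Basis ι ℝ E) :
    ∃ C ≠ ⊤, ∀ {f : E → ℝ}, LocallyIntegrable f μ →
      (∀ i, ∫⁻ x, derivMaximalFunction μ ψ f (b i) x ^ p ∂μ ≠ ⊤) →
        ∃ g : E → ℝ≥0, Measurable g ∧ HasHajlaszGradient μ f g ∧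
          ∫⁻ x, (g x : ℝ≥0∞) ^ p ∂μ ≤
            C * ∑ i, ∫⁻ x, derivMaximalFunction μ ψ f (b i) x ^ p ∂μ := by
  obtain ⟨r, hr, hr0, hr1, hrp⟩ := exists_exponent_le_one_of_div_add_one_lt hp
  have hp0 : 0 < p := hr0.trans hrp
  obtain ⟨C₁, hgradient⟩ := hψ.exists_hasHajlaszGradient hr hr1 b
  obtain ⟨C₂, hC₂, hnorm⟩ := hψ.exists_lintegral_gradientMaximalFunction_rpow_le hr0 hrp b
  refine ⟨C₁ ^ p * C₂, by finiteness, fun {f} hf hfin => ?_⟩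
  set Λ : E → ℝ≥0∞ := gradientMaximalFunction μ b r ψ f
  have hΛ : Measurable Λ :=
    Finset.measurable_fun_sum _ fun i _ => measurable_powerMaximalFunction μ r _
  have hΛfin : ∫⁻ x, Λ x ^ p ∂μ ≠ ⊤ :=
    ne_top_of_le_ne_top (mul_ne_top hC₂ (ENNReal.sum_ne_top.2 fun i _ => hfin i)) (hnorm hf)
  have hΛae : ∀ᵐ x ∂μ, Λ x ≠ ⊤ := by
    filter_upwards [ae_lt_top (hΛ.pow_const p) hΛfin] with x hx
    exact (ENNReal.rpow_lt_top_iff_of_pos hp0).1 hx |>.ne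
  refine ⟨fun x => C₁ * (Λ x).toNNReal, hΛ.ennreal_toNNReal.const_mul C₁, hgradient hf hΛae, ?_⟩
  calc ∫⁻ x, (C₁ * (Λ x).toNNReal : ℝ≥0) ^ p ∂μ
      ≤ ∫⁻ x, C₁ ^ p * Λ x ^ p ∂μ := lintegral_mono fun x => by
        rw [← ENNReal.mul_rpow_of_nonneg _ _ hp0.le, ENNReal.coe_mul]
        exact ENNReal.rpow_le_rpow (mul_le_mul_right coe_toNNReal_le_self _) hp0.le
    _ = C₁ ^ p * ∫⁻ x, Λ x ^ p ∂μ := lintegral_const_mul' _ _ (by finiteness)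
    _ ≤ _ := by
        rw [mul_assoc]
        exact mul_le_mul_right (hnorm hf) _

end IsMollifier

end Convolution

/-! ### Euclidean space -/

section EuclideanSpace

variable {n : ℕ} {ψ f : EuclideanSpace ℝ (Fin n) → ℝ}

theorem isHajlaszGradientOn_univ_coe_iff {g : EuclideanSpace ℝ (Fin n) → ℝ≥0} :
    IsHajlaszGradientOn n f (fun x => g x) univ ↔
      Measurable g ∧ HasHajlaszGradient volume f g := by
  have hle (x y : EuclideanSpace ℝ (Fin n)) : |f x - f y| ≤ ‖x - y‖ * (g x + g y) ↔
      edist (f x) (f y) ≤ edist x y * (g x + g y) := by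
    simp only [edist_nndist, ← ENNReal.coe_add, ← ENNReal.coe_mul, ENNReal.coe_le_coe]
    rw [← Real.dist_eq, ← dist_eq_norm, ← NNReal.coe_le_coe]
    rfl
  simp only [IsHajlaszGradientOn, HasHajlaszGradient, ← compl_eq_univ_sdiff, mem_compl_iff, hle,
    NNReal.coe_nonneg, implies_true, true_and, measurable_coe_nnreal_real_iff]

theorem lpNorm_coe_nnreal (p : ℝ) (g : EuclideanSpace ℝ (Fin n) → ℝ≥0)
    (μ : Measure (EuclideanSpace ℝ (Fin n))) :
    lpNorm n p (fun x => g x) μ = (∫⁻ x, (g x : ℝ≥0∞) ^ p ∂μ) ^ (1 / p) := by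
  simp only [_root_.lpNorm, NNReal.abs_eq, ENNReal.ofReal_coe_nnreal]

theorem smoothMax_eq_derivMaximalFunction (hψ : Differentiable ℝ ψ) (j : Fin n) :
    smoothMax n ψ f j =
      derivMaximalFunction volume ψ f ((EuclideanSpace.basisFun (Fin n) ℝ).toBasis j) := by
  ext x
  refine iSup_congr fun ⟨t, ht⟩ => ?_
  have hscale (y : EuclideanSpace ℝ (Fin n)) (c : ℝ) :
      f y * ((t⁻¹) ^ n * c) = (t⁻¹) ^ n * (f y * c) := mul_left_comm _ _ _
  simp only [mollifiedDeriv_eq_inv_mul_convolution volume hψ, convolution_mul, dilation,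
    finrank_euclideanSpace_fin, hscale, integral_const_mul, OrthonormalBasis.coe_toBasis,
    EuclideanSpace.basisFun_apply]
  rw [← ofReal_norm, norm_mul, norm_mul, norm_pow, Real.norm_of_nonneg (inv_nonneg.2 ht.le),
    Real.norm_eq_abs, pow_succ', mul_assoc]

variable [NeZero n] {p : ℝ}

theorem exists_sum_smoothMax_le_mul_lpNorm (hψ : IsMollifier volume ψ)
    (hp : (n : ℝ) / (n + 1) < p) :
    ∃ A ≠ ⊤, ∀ {f g : EuclideanSpace ℝ (Fin n) → ℝ}, LocallyIntegrable f →
      IsHajlaszGradientOn n f g univ →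
        ∑ j, (∫⁻ x, smoothMax n ψ f j x ^ p) ^ (1 / p) ≤ A * lpNorm n p g volume := by
  have hp0 : 0 ≤ 1 / p := one_div_nonneg.2 ((show (0 : ℝ) ≤ _ by positivity).trans hp.le)
  choose A hA hle using fun j => hψ.exists_lintegral_derivMaximalFunction_rpow_le
    (p := p) (by simpa using hp) ((EuclideanSpace.basisFun (Fin n) ℝ).toBasis j)
  refine ⟨∑ j, A j ^ (1 / p),
    ENNReal.sum_ne_top.2 fun j _ => ENNReal.rpow_ne_top_of_nonneg hp0 (hA j), ?_⟩
  intro f g hf hg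
  lift g to EuclideanSpace ℝ (Fin n) → ℝ≥0 using hg.2.1
  obtain ⟨hgm, hfg⟩ := isHajlaszGradientOn_univ_coe_iff.1 hg
  rw [lpNorm_coe_nnreal, Finset.sum_mul]
  refine Finset.sum_le_sum fun j _ => ?_
  rw [smoothMax_eq_derivMaximalFunction hψ.differentiable, ← ENNReal.mul_rpow_of_nonneg _ _ hp0]
  exact ENNReal.rpow_le_rpow (hle j hf hgm hfg) hp0

theorem exists_isHajlaszGradientOn_lpNorm_le (hψ : IsMollifier volume ψ)
    (hp : (n : ℝ) / (n + 1) < p) :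
    ∃ B ≠ ⊤, ∀ {f : EuclideanSpace ℝ (Fin n) → ℝ}, LocallyIntegrable f →
      (∀ j, (∫⁻ x, smoothMax n ψ f j x ^ p) ^ (1 / p) ≠ ⊤) →
        ∃ g, IsHajlaszGradientOn n f g univ ∧
          lpNorm n p g volume ≤ B * ∑ j, (∫⁻ x, smoothMax n ψ f j x ^ p) ^ (1 / p) := by
  have hp0 : 0 < p := (show (0 : ℝ) ≤ _ by positivity).trans_lt hp
  have hp' : 0 < 1 / p := one_div_pos.2 hp0
  obtain ⟨C, hC, hgradient⟩ := hψ.exists_hasHajlaszGradient_lintegral_rpow_le (p := p)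
    (by simpa using hp) (EuclideanSpace.basisFun (Fin n) ℝ).toBasis
  simp only [← smoothMax_eq_derivMaximalFunction hψ.differentiable] at hgradient
  refine ⟨C ^ (1 / p) * (n : ℝ≥0∞) ^ (1 / p), by finiteness, fun {f} hf hfin => ?_⟩
  obtain ⟨g, hgm, hfg, hle⟩ := hgradient hf fun j hj =>
    hfin j (by rw [hj, ENNReal.top_rpow_of_pos hp'])
  refine ⟨fun x => g x, isHajlaszGradientOn_univ_coe_iff.2 ⟨hgm, hfg⟩, ?_⟩
  rw [lpNorm_coe_nnreal]
  calc (∫⁻ x, (g x : ℝ≥0∞) ^ p) ^ (1 / p)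
      ≤ C ^ (1 / p) * (∑ j, ∫⁻ x, smoothMax n ψ f j x ^ p) ^ (1 / p) := by
        rw [← ENNReal.mul_rpow_of_nonneg _ _ hp'.le]
        exact ENNReal.rpow_le_rpow hle hp'.le
    _ ≤ C ^ (1 / p) * ((n : ℝ≥0∞) ^ (1 / p) * ∑ j, (∫⁻ x, smoothMax n ψ f j x ^ p) ^ (1 / p)) := by
        refine mul_le_mul_right ?_ _
        simpa only [Finset.card_univ, Fintype.card_fin] using
          sum_rpow_le_card_rpow_mul_sum_rpow Finset.univ
            (fun j => ∫⁻ x, smoothMax n ψ f j x ^ p) hp'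
    _ = _ := (mul_assoc _ _ _).symm

end EuclideanSpace

theorem hardy_sobolev_hajlasz_characterization_general
    (n : ℕ) (hn : 1 ≤ n) (p : ℝ) (hp : (n : ℝ) / (n + 1) < p)
    (ψ : EuclideanSpace ℝ (Fin n) → ℝ) (hψ : ContDiff ℝ 1 ψ)
    (hψsupp : tsupport ψ ⊆ ball 0 1) (hψint : ∫ x, ψ x = 1) :
    ∃ C : ℝ≥0∞, 1 ≤ C ∧ C ≠ ⊤ ∧
      ∀ f : EuclideanSpace ℝ (Fin n) → ℝ, LocallyIntegrable f →
        (((∃ g, IsHajlaszGradientOn n f g univ ∧ lpNorm n p g volume ≠ ⊤) ↔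
            ∀ j : Fin n, (∫⁻ x, smoothMax n ψ f j x ^ p) ^ (1 / p) ≠ ⊤) ∧
          C⁻¹ * ∑ j : Fin n, (∫⁻ x, smoothMax n ψ f j x ^ p) ^ (1 / p) ≤
              sInf {r : ℝ≥0∞ | ∃ g, IsHajlaszGradientOn n f g univ ∧
                r = lpNorm n p g volume} ∧
          sInf {r : ℝ≥0∞ | ∃ g, IsHajlaszGradientOn n f g univ ∧
                r = lpNorm n p g volume} ≤
              C * ∑ j : Fin n, (∫⁻ x, smoothMax n ψ f j x ^ p) ^ (1 / p)) := by
  have : NeZero n := ⟨Nat.one_le_iff_ne_zero.1 hn⟩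
  have hmollifier : IsMollifier volume ψ := ⟨hψ, hψsupp, hψint⟩
  obtain ⟨A, hA, hnecessary⟩ := exists_sum_smoothMax_le_mul_lpNorm hmollifier hp
  obtain ⟨B, hB, hsufficient⟩ := exists_isHajlaszGradientOn_lpNorm_le hmollifier hp
  have hC : 1 + A + B ≠ ⊤ := by finiteness
  refine ⟨1 + A + B, add_assoc 1 A B ▸ le_self_add, hC, fun f hf => ⟨⟨?_, fun hfin => ?_⟩, ?_, ?_⟩⟩
  · rintro ⟨g, hg, hgfin⟩ j
    exact ENNReal.sum_ne_top.1 (ne_top_of_le_ne_top (mul_ne_top hA hgfin) (hnecessary hf hg)) j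
      (Finset.mem_univ j)
  · obtain ⟨g, hg, hle⟩ := hsufficient hf hfin
    exact ⟨g, hg, ne_top_of_le_ne_top (mul_ne_top hB (ENNReal.sum_ne_top.2 fun j _ => hfin j)) hle⟩
  · refine le_sInf ?_
    rintro _ ⟨g, hg, rfl⟩
    rw [ENNReal.inv_mul_le_iff (by positivity) hC]
    exact (hnecessary hf hg).trans (mul_le_mul_left (le_add_self.trans le_self_add) _)
  · by_cases hfin : ∀ j, (∫⁻ x, smoothMax n ψ f j x ^ p) ^ (1 / p) ≠ ⊤
    · obtain ⟨g, hg, hle⟩ := hsufficient hf hfin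
      exact sInf_le_of_le ⟨g, hg, rfl⟩ (hle.trans (mul_le_mul_left le_add_self _))
    · obtain ⟨j, hj⟩ := not_forall_not.1 hfin
      rw [ENNReal.sum_eq_top.2 ⟨j, Finset.mem_univ j, hj⟩, ENNReal.mul_top (by positivity)]
      exact le_top

/-- **Theorem 1.1.** For `n ≥ 1` and `n/(n+1) < p ≤ 1`, a locally integrable `f` has a
Hajlasz gradient in `L^p(ℝⁿ)` iff each smooth maximal function `M_ψ(D_j f)` is in
`L^p(ℝⁿ)`, with equivalence of (quasi)norms. -/
theorem hardy_sobolev_hajlasz_characterization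
    (n : ℕ) (hn : 1 ≤ n) (p : ℝ) (hp1 : (n : ℝ) / (n + 1) < p) (hp2 : p ≤ 1)
    (ψ : EuclideanSpace ℝ (Fin n) → ℝ) (hψ : ContDiff ℝ (⊤ : ℕ∞) ψ)
    (hψsupp : tsupport ψ ⊆ ball 0 1) (hψint : ∫ x, ψ x = 1) :
    ∃ C : ℝ≥0∞, 1 ≤ C ∧ C ≠ ⊤ ∧
      ∀ f : EuclideanSpace ℝ (Fin n) → ℝ, LocallyIntegrable f →
        (((∃ g, IsHajlaszGradientOn n f g univ ∧ lpNorm n p g volume ≠ ⊤) ↔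
            ∀ j : Fin n, (∫⁻ x, smoothMax n ψ f j x ^ p) ^ (1 / p) ≠ ⊤) ∧
          C⁻¹ * ∑ j : Fin n, (∫⁻ x, smoothMax n ψ f j x ^ p) ^ (1 / p) ≤
              sInf {r : ℝ≥0∞ | ∃ g, IsHajlaszGradientOn n f g univ ∧
                r = lpNorm n p g volume} ∧
          sInf {r : ℝ≥0∞ | ∃ g, IsHajlaszGradientOn n f g univ ∧
                r = lpNorm n p g volume} ≤
              C * ∑ j : Fin n, (∫⁻ x, smoothMax n ψ f j x ^ p) ^ (1 / p)) :=
  hardy_sobolev_hajlasz_characterization_general n hn p hp1 ψ (hψ.of_le (by simp)) hψsupp hψint
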